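/- arXiv:1706.04079 — 2 statements merged into one kernel-verified Lean document; each statement's English description precedes it below -/
import Mathlib

section
/- Let s ∈ (0,∞) and let (a_n)_{n≥0} be a decreasing sequence of nonnegative real numbers, and let f(z) = ∑_{n=0}^∞ a_n z^n (which is analytic on the unit disc 𝔻 since (a_n) is bounded). Then f ∈ Q_s if and only if a_n = O(1/n) as n → ∞. -/
open MeasureTheory Set Metric ENNReal

noncomputable section

namespace PaperHankel

/-- The moment of order `n` of a measure on `[0,1)`:  `μ_n = ∫_{[0,1)} t^n dμ(t)`. -/
def mom (μ : Measure ℝ) (n : ℕ) : ℝ := ∫ t in Ico (0:ℝ) 1, t ^ n ∂μ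

/-- The `n`-th Taylor coefficient of `f` at `0`. -/
def tc (f : ℂ → ℂ) (n : ℕ) : ℂ := iteratedDeriv n f 0 / n.factorial

/-- The `n`-th Taylor coefficient of `H_μ f`, namely `∑_k μ_{n+k} a_k`. -/
def hmuCoeff (μ : Measure ℝ) (f : ℂ → ℂ) (n : ℕ) : ℂ :=
  ∑' k : ℕ, (mom μ (n + k) : ℂ) * tc f k

/-- `H_μ f` is well defined: each coefficient series converges absolutely, and the resulting
power series has radius of convergence at least `1`. -/
def HmuWD (μ : Measure ℝ) (f : ℂ → ℂ) : Prop :=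
  (∀ n : ℕ, Summable fun k : ℕ => ‖(mom μ (n + k) : ℂ) * tc f k‖) ∧
  ∀ z ∈ ball (0:ℂ) 1, Summable fun n : ℕ => ‖hmuCoeff μ f n * z ^ n‖

/-- The generalized Hilbert operator induced by the Hankel matrix of moments of `μ`. -/
def Hmu (μ : Measure ℝ) (f : ℂ → ℂ) : ℂ → ℂ :=
  fun z => ∑' n : ℕ, hmuCoeff μ f n * z ^ n

/-- `I_μ f` is well defined: the defining integral converges absolutely for every `z ∈ 𝔻`. -/
def ImuWD (μ : Measure ℝ) (f : ℂ → ℂ) : Prop :=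
  ∀ z ∈ ball (0:ℂ) 1, IntegrableOn (fun t : ℝ => f t / (1 - t * z)) (Ico (0:ℝ) 1) μ

/-- The integral operator `I_μ f (z) = ∫_{[0,1)} f(t)/(1-tz) dμ(t)`. -/
def Imu (μ : Measure ℝ) (f : ℂ → ℂ) : ℂ → ℂ :=
  fun z => ∫ t in Ico (0:ℝ) 1, f t / (1 - t * z) ∂μ

/-- The `p`-th circle mean `M_p(r,f)` raised into the Hardy norm shape:
`((1/2π) ∫_0^{2π} |f(r e^{iθ})|^p dθ)^{1/p}`. -/
def circMean (p : ℝ) (f : ℂ → ℂ) (r : ℝ) : ℝ :=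
  ((2 * Real.pi)⁻¹ * ∫ θ in (0:ℝ)..(2 * Real.pi),
      ‖f (r * Complex.exp (θ * Complex.I))‖ ^ p) ^ (1 / p)

/-- Membership in the Hardy space `H^p`. -/
def MemHardy (p : ℝ) (f : ℂ → ℂ) : Prop :=
  DifferentiableOn ℂ f (ball (0:ℂ) 1) ∧ ∃ M : ℝ, ∀ r ∈ Ico (0:ℝ) 1, circMean p f r ≤ M

/-- The `H^p` norm. -/
def hardyNorm (p : ℝ) (f : ℂ → ℂ) : ℝ :=
  sSup {x : ℝ | ∃ r ∈ Ico (0:ℝ) 1, x = circMean p f r}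

/-- Membership in `H^∞`: analytic and bounded on the unit disc. -/
def MemHinf (f : ℂ → ℂ) : Prop :=
  DifferentiableOn ℂ f (ball (0:ℂ) 1) ∧ ∃ M : ℝ, ∀ z ∈ ball (0:ℂ) 1, ‖f z‖ ≤ M

/-- The `H^∞` norm. -/
def hinfNorm (f : ℂ → ℂ) : ℝ := sSup {x : ℝ | ∃ z ∈ ball (0:ℂ) 1, x = ‖f z‖}

/-- The mean `M_2(r,g) = ((1/2π) ∫_0^{2π} |g(r e^{iθ})|² dθ)^{1/2}`. -/
def M2 (g : ℂ → ℂ) (r : ℝ) : ℝ :=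
  Real.sqrt ((2 * Real.pi)⁻¹ * ∫ θ in (0:ℝ)..(2 * Real.pi),
      ‖g (r * Complex.exp (θ * Complex.I))‖ ^ 2)

/-- Membership in the mean Lipschitz space `Λ²_{1/2}`:
`M_2(r,f') = O((1-r)^{-1/2})` as `r → 1⁻`. -/
def MemLambda (f : ℂ → ℂ) : Prop :=
  DifferentiableOn ℂ f (ball (0:ℂ) 1) ∧
  ∃ C : ℝ, ∀ r ∈ Ico (0:ℝ) 1, Real.sqrt (1 - r) * M2 (deriv f) r ≤ C

/-- The norm on `Λ²_{1/2}`. -/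
def lambdaNorm (f : ℂ → ℂ) : ℝ :=
  ‖f 0‖ + sSup {x : ℝ | ∃ r ∈ Ico (0:ℝ) 1, x = Real.sqrt (1 - r) * M2 (deriv f) r}

/-- `∫_𝔻 |f'(z)|² g(z,a)^s dA(z)` with `g(z,a) = log |(1- ā z)/(z-a)|` and `dA` the
normalized area measure, computed as a lower integral in `[0,∞]`. -/
def qsInt (s : ℝ) (f : ℂ → ℂ) (a : ℂ) : ℝ≥0∞ :=
  (ENNReal.ofReal Real.pi)⁻¹ * ∫⁻ z in ball (0:ℂ) 1,
    ENNReal.ofReal (‖deriv f z‖ ^ 2 * (Real.log ‖(1 - (starRingEnd ℂ) a * z) / (z - a)‖) ^ s)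

/-- Membership in `Q_s`: analytic on `𝔻` with `ρ_{Q_s}(f)² = sup_{a ∈ 𝔻} ∫ ... < ∞`. -/
def MemQs (s : ℝ) (f : ℂ → ℂ) : Prop :=
  DifferentiableOn ℂ f (ball (0:ℂ) 1) ∧ (⨆ a ∈ ball (0:ℂ) 1, qsInt s f a) < ⊤

/-- The norm on `Q_s`, `‖f‖ = |f(0)| + ρ_{Q_s}(f)`. -/
def qsNorm (s : ℝ) (f : ℂ → ℂ) : ℝ :=
  ‖f 0‖ + Real.sqrt (⨆ a ∈ ball (0:ℂ) 1, qsInt s f a).toReal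

/-- The condition `∫_{[0,1)} tⁿ log(1/(1-t)) dμ(t) = O(1/n)`, stated with the lower
integral so that in particular the integrals are finite. -/
def LogMomentBigO (μ : Measure ℝ) : Prop :=
  ∃ C > 0, ∀ n : ℕ, 1 ≤ n →
    (∫⁻ t in Ico (0:ℝ) 1, ENNReal.ofReal (t ^ n * Real.log (1 / (1 - t))) ∂μ) ≤
      ENNReal.ofReal (C / n)

/-- Membership in the Bloch space. -/
def MemBloch (f : ℂ → ℂ) : Prop :=
  DifferentiableOn ℂ f (ball (0:ℂ) 1) ∧
  ∃ M : ℝ, ∀ z ∈ ball (0:ℂ) 1, (1 - ‖z‖ ^ 2) * ‖deriv f z‖ ≤ M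

/-- The Bloch norm `‖f‖ = |f(0)| + ρ_B(f)`. -/
def blochNorm (f : ℂ → ℂ) : ℝ :=
  ‖f 0‖ + sSup {x : ℝ | ∃ z ∈ ball (0:ℂ) 1, x = (1 - ‖z‖ ^ 2) * ‖deriv f z‖}

/-- Membership in the Besov space `B^p`. -/
def MemBesov (p : ℝ) (f : ℂ → ℂ) : Prop :=
  DifferentiableOn ℂ f (ball (0:ℂ) 1) ∧
  IntegrableOn (fun z : ℂ => (1 - ‖z‖ ^ 2) ^ (p - 2) * ‖deriv f z‖ ^ p) (ball (0:ℂ) 1) volume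

/-- The Besov norm `‖f‖ = |f(0)| + ρ_p(f)`. -/
def besovNorm (p : ℝ) (f : ℂ → ℂ) : ℝ :=
  ‖f 0‖ + (Real.pi⁻¹ *
    ∫ z in ball (0:ℂ) 1, (1 - ‖z‖ ^ 2) ^ (p - 2) * ‖deriv f z‖ ^ p) ^ (1 / p)

/-- `μ` is an `α`-logarithmic `s`-Carleson measure on `[0,1)`. -/
def IsLogCarleson (μ : Measure ℝ) (α s : ℝ) : Prop :=
  ∃ C > 0, ∀ t ∈ Ico (0:ℝ) 1,
    (μ (Ico t 1)).toReal * Real.log (2 / (1 - t)) ^ α ≤ C * (1 - t) ^ s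

/-- `μ` is an `s`-Carleson measure on `[0,1)`. -/
def IsCarleson (μ : Measure ℝ) (s : ℝ) : Prop :=
  ∃ C > 0, ∀ t ∈ Ico (0:ℝ) 1, (μ (Ico t 1)).toReal ≤ C * (1 - t) ^ s



lemma aux_polar (g : ℂ → ℝ≥0∞) (hg : Measurable g) (c : ℂ) (R : ℝ) :
    ∫⁻ z in ball c R, g z =
      ∫⁻ r in Ioo 0 R, ENNReal.ofReal r * ∫⁻ θ in Ioo (-Real.pi) Real.pi, g (circleMap c r θ) := by
  have hm : Measurable (fun z => (ball c R).indicator g z) := hg.indicator measurableSet_ball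
  rw [← lintegral_indicator measurableSet_ball,
    ← lintegral_add_left_eq_self (μ := volume) (fun z => (ball c R).indicator g z) c,
    ← Complex.lintegral_comp_polarCoord_symm]
  have h0 : polarCoord.target = Ioi (0:ℝ) ×ˢ Ioo (-Real.pi) Real.pi := rfl
  have h1 : ∀ p : ℝ × ℝ, c + Complex.polarCoord.symm p = circleMap c p.1 p.2 := by
    intro p
    rw [Complex.polarCoord_symm_apply, circleMap, Complex.exp_mul_I]
    push_cast; rfl
  simp_rw [h1]
  have hcm : Measurable (fun p : ℝ × ℝ => circleMap c p.1 p.2) := by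
    unfold circleMap; fun_prop
  rw [h0, Measure.volume_eq_prod, setLIntegral_prod]
  swap
  · refine Measurable.aemeasurable ?_
    exact (ENNReal.measurable_ofReal.comp measurable_fst).mul (hm.comp hcm)
  have : Ioo 0 R = Iio R ∩ Ioi 0 := by rw [inter_comm]; rfl
  rw [this, ← Measure.restrict_restrict measurableSet_Iio, ← lintegral_indicator measurableSet_Iio]
  refine setLIntegral_congr_fun measurableSet_Ioi fun r hr => ?_
  have hr' : (0:ℝ) < r := hr
  have hmem : ∀ θ, circleMap c r θ ∈ ball c R ↔ r < R := fun θ => by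
    simp [mem_ball, dist_eq_norm, circleMap_sub_center, abs_of_pos hr']
  have hcr : Measurable (fun θ : ℝ => circleMap c r θ) := (continuous_circleMap c r).measurable
  by_cases h : r < R
  · simp only [indicator, hmem, h, mem_Iio, if_true, smul_eq_mul]
    exact lintegral_const_mul _ (hg.comp hcr)
  · simp [indicator, hmem, h, mem_Iio]

lemma aux_circ (h : ℂ → ℝ) (hn : ∀ z, 0 ≤ h z) (c : ℂ) (R : ℝ)
    (hc : Continuous (fun θ => h (circleMap c R θ))) :
    ∫⁻ θ in Ioo (-Real.pi) Real.pi, ENNReal.ofReal (h (circleMap c R θ)) =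
      ENNReal.ofReal (2 * Real.pi * Real.circleAverage h c R) := by
  have e1 : 2 * Real.pi * Real.circleAverage h c R = ∫ θ in (-Real.pi)..Real.pi, h (circleMap c R θ) := by
    rw [Real.circleAverage_def, smul_eq_mul, ← mul_assoc, mul_inv_cancel₀ (by positivity), one_mul]
    have hp : Function.Periodic (fun θ => h (circleMap c R θ)) (2 * Real.pi) :=
      fun θ => by simp [periodic_circleMap c R θ]
    have := hp.intervalIntegral_add_eq 0 (-Real.pi)
    convert this using 2 <;> ring
  rw [e1, intervalIntegral.integral_of_le (by linarith [Real.pi_pos]), integral_Ioc_eq_integral_Ioo,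
    ofReal_integral_eq_lintegral_ofReal]
  · exact (hc.integrableOn_Icc (a := -Real.pi) (b := Real.pi)).mono_set Ioo_subset_Icc_self
  · exact Filter.Eventually.of_forall fun θ => hn _

lemma aux_mv (F : ℂ → ℂ) (c : ℂ) (R t : ℝ) (ht : 0 < t) (htR : t < R) (hF : DifferentiableOn ℂ F (ball c R)) :
    ENNReal.ofReal (2 * Real.pi * ‖F c‖ ^ 2) ≤
     ∫⁻ θ in Ioo (-Real.pi) Real.pi, ENNReal.ofReal (‖F (circleMap c t θ)‖ ^ 2) := by
  have hmem : ∀ θ, circleMap c t θ ∈ ball c R := fun θ => by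
    simp [mem_ball, dist_eq_norm, circleMap_sub_center, abs_of_pos ht, htR]
  have hcont : Continuous (fun θ => F (circleMap c t θ)) :=
    hF.continuousOn.comp_continuous (continuous_circleMap c t) hmem
  rw [aux_circ (fun z => ‖F z‖ ^ 2) (fun z => by positivity) c t (hcont.norm.pow 2)]
  apply ENNReal.ofReal_le_ofReal
  gcongr
  have hd : DiffContOnCl ℂ (fun z => F z ^ 2) (ball c |t|) := by
    refine DifferentiableOn.diffContOnCl ?_
    refine (hF.pow 2).mono ?_
    rw [abs_of_pos ht]
    exact closure_ball_subset_closedBall.trans (closedBall_subset_ball htR)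
  have h1 := hd.circleAverage
  have h2 : ‖F c‖ ^ 2 = ‖Real.circleAverage (fun z => F z ^ 2) c t‖ := by rw [h1, norm_pow]
  rw [h2, Real.circleAverage_def, Real.circleAverage_def, norm_smul, smul_eq_mul, Real.norm_of_nonneg (by positivity)]
  gcongr
  have := intervalIntegral.norm_integral_le_integral_norm (a := 0) (b := 2 * Real.pi) (μ := volume)
    (f := fun θ => F (circleMap c t θ) ^ 2) (by positivity)
  simpa [norm_pow] using this

lemma aux_parseval (c : ℕ → ℂ) (r B : ℝ) (F : ℂ → ℂ) (hF : ∀ θ : ℝ, HasSum (fun n => c n * (circleMap 0 r θ) ^ n) (F (circleMap 0 r θ)))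
    (hB : ∀ N, ∑ n ∈ Finset.range N, ‖c n * (r:ℂ) ^ n‖ ^ 2 ≤ B) :
    ∫⁻ θ in Ioo (-Real.pi) Real.pi, ENNReal.ofReal (‖F (circleMap 0 r θ)‖ ^ 2) ≤
      ENNReal.ofReal (2 * Real.pi * B) := by
  let p : ℕ → Polynomial ℂ := fun N => ∑ n ∈ Finset.range N, Polynomial.monomial n (c n * (r:ℂ) ^ n)
  have hp : ∀ N θ, (p N).eval (circleMap 0 1 θ) = ∑ n ∈ Finset.range N, c n * (circleMap 0 r θ) ^ n := by
    intro N θ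
    simp only [p, Polynomial.eval_finsetSum, Polynomial.eval_monomial]
    refine Finset.sum_congr rfl fun n _ => ?_
    simp [circleMap, mul_pow, mul_assoc]
  have hlim : ∀ θ, Filter.Tendsto (fun N => ENNReal.ofReal (‖(p N).eval (circleMap 0 1 θ)‖ ^ 2)) Filter.atTop
      (nhds (ENNReal.ofReal (‖F (circleMap 0 r θ)‖ ^ 2))) := by
    intro θ
    simp_rw [hp]
    exact ENNReal.tendsto_ofReal (((hF θ).tendsto_sum_nat.norm).pow 2)
  have hc : ∀ N, Continuous (fun θ => (p N).eval (circleMap 0 1 θ)) := fun N =>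
    (p N).continuous.comp (continuous_circleMap 0 1)
  calc _ = ∫⁻ θ in Ioo (-Real.pi) Real.pi, Filter.liminf (fun N => ENNReal.ofReal (‖(p N).eval (circleMap 0 1 θ)‖ ^ 2)) Filter.atTop := by
        congr 1; ext θ; exact (hlim θ).liminf_eq.symm
    _ ≤ Filter.liminf (fun N => ∫⁻ θ in Ioo (-Real.pi) Real.pi, ENNReal.ofReal (‖(p N).eval (circleMap 0 1 θ)‖ ^ 2)) Filter.atTop := by
        apply lintegral_liminf_le
        intro N
        have := hc N
        exact ENNReal.measurable_ofReal.comp (by fun_prop)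
    _ ≤ _ := by
        have : ∀ N, ∫⁻ θ in Ioo (-Real.pi) Real.pi, ENNReal.ofReal (‖(p N).eval (circleMap 0 1 θ)‖ ^ 2) ≤ ENNReal.ofReal (2 * Real.pi * B) := by
          intro N
          have := hc N
          rw [aux_circ (fun z => ‖(p N).eval z‖ ^ 2) (fun z => by positivity) 0 1 (by fun_prop),
            ← Polynomial.sum_sq_norm_coeff_eq_circleAverage]
          apply ENNReal.ofReal_le_ofReal
          gcongr
          refine le_trans ?_ (hB N)
          have hco : ∀ i, (p N).coeff i = if i < N then c i * (r:ℂ) ^ i else 0 := by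
            intro i
            simp [p, Polynomial.coeff_monomial]
          have hsub : (p N).support ⊆ Finset.range N := by
            intro i hi
            rw [Polynomial.mem_support_iff, hco] at hi
            simp only [Finset.mem_range]
            by_contra h
            simp [h] at hi
          refine (Finset.sum_le_sum_of_subset_of_nonneg hsub fun _ _ _ => by positivity).trans (le_of_eq ?_)
          refine Finset.sum_congr rfl fun i hi => ?_
          rw [hco, if_pos (Finset.mem_range.1 hi)]
        exact (Filter.liminf_le_liminf (Filter.Eventually.of_forall this)).trans (by simp)

lemma aux_deriv (a : ℕ → ℝ)
    (hmono : Antitone a) (hnonneg : ∀ n, 0 ≤ a n) (f : ℂ → ℂ)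
    (hf : ∀ z ∈ ball (0:ℂ) 1, f z = ∑' n : ℕ, (a n : ℂ) * z ^ n) (z : ℂ) (hz : z ∈ ball (0:ℂ) 1) :
    DifferentiableAt ℂ f z ∧
      HasSum (fun n : ℕ => (((n + 1 : ℝ) * a (n + 1) : ℝ) : ℂ) * z ^ n) (deriv f z) := by
  have hz1 : ‖z‖ < 1 := by simpa using hz
  obtain ⟨ρ, hzρ, hρ1⟩ := exists_between hz1
  have hρ0 : 0 ≤ ρ := (norm_nonneg z).trans hzρ.le
  have ha0 : ∀ n, a n ≤ a 0 := fun n => hmono (Nat.zero_le n)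
  have hu : Summable (fun n : ℕ => a 0 * (n * ρ ^ (n - 1))) := by
    refine Summable.mul_left _ ?_
    rw [← summable_nat_add_iff 1]
    simp only [Nat.add_sub_cancel]
    have h1 := summable_pow_mul_geometric_of_norm_lt_one 1 (r := ρ) (by rwa [Real.norm_of_nonneg hρ0])
    have h2 := summable_geometric_of_lt_one hρ0 hρ1
    refine (h1.add h2).congr fun n => ?_
    push_cast; ring
  have hg' : ∀ (n : ℕ) (y : ℂ), y ∈ ball (0:ℂ) ρ → ‖(a n : ℂ) * (n * y ^ (n - 1))‖ ≤ a 0 * (n * ρ ^ (n - 1)) := by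
    intro n y hy
    have hy' : ‖y‖ ≤ ρ := by simpa using (mem_ball_zero_iff.1 hy).le
    simp only [norm_mul, norm_pow, Complex.norm_real, Complex.norm_natCast, Real.norm_of_nonneg (hnonneg n)]
    gcongr
    · exact hnonneg 0
    · exact ha0 n
  have hzb : z ∈ ball (0:ℂ) ρ := by simpa using hzρ
  have key := hasDerivAt_tsum_of_isPreconnected (𝕜 := ℂ) (g := fun (n : ℕ) (y : ℂ) => (a n : ℂ) * y ^ n)
    (g' := fun (n : ℕ) (y : ℂ) => (a n : ℂ) * (n * y ^ (n - 1))) hu isOpen_ball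
    (convex_ball (0:ℂ) ρ).isPreconnected
    (fun n y _ => (hasDerivAt_pow n y).const_mul _) hg' (y₀ := 0)
    (by simpa using hρ0.lt_of_ne (by rintro rfl; exact absurd hzρ (not_lt.2 (norm_nonneg z))))
    (by
      refine summable_of_ne_finset_zero (s := {0}) fun n hn => ?_
      have : n ≠ 0 := by simpa using hn
      simp [this]) hzb
  have hd : HasDerivAt f (∑' n : ℕ, (a n : ℂ) * (n * z ^ (n - 1))) z := by
    refine key.congr_of_eventuallyEq ?_
    filter_upwards [isOpen_ball.mem_nhds hz] with w hw using hf w hw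
  refine ⟨hd.differentiableAt, ?_⟩
  rw [hd.deriv]
  have hs : Summable (fun n : ℕ => (a n : ℂ) * (n * z ^ (n - 1))) :=
    Summable.of_norm_bounded hu fun n => hg' n z hzb
  have h3 := hs.hasSum
  rw [← hasSum_nat_add_iff' 1] at h3
  simp only [Finset.range_one, Finset.sum_singleton, CharP.cast_eq_zero, zero_mul, mul_zero, sub_zero] at h3
  refine h3.congr_fun ?_ 
  intro n
  simp only [Nat.add_sub_cancel]
  push_cast; ring

lemma aux_id (a z : ℂ) : ‖1 - (starRingEnd ℂ) a * z‖ ^ 2 = ‖z - a‖ ^ 2 + (1 - ‖a‖ ^ 2) * (1 - ‖z‖ ^ 2) := by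
  simp only [Complex.sq_norm, Complex.normSq_apply]
  simp
  ring

lemma aux_ge_one (a z : ℂ) (ha : ‖a‖ < 1) (hz : ‖z‖ < 1) : ‖z - a‖ ≤ ‖1 - (starRingEnd ℂ) a * z‖ := by
  apply (sq_le_sq₀ (norm_nonneg _) (norm_nonneg _)).1
  rw [aux_id]
  have h1 : 0 ≤ 1 - ‖a‖ ^ 2 := by nlinarith [norm_nonneg a]
  have h2 : 0 ≤ 1 - ‖z‖ ^ 2 := by nlinarith [norm_nonneg z]
  nlinarith [mul_nonneg h1 h2]

lemma aux_log_nonneg (a z : ℂ) (ha : ‖a‖ < 1) (hz : ‖z‖ < 1) :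
    0 ≤ Real.log ‖(1 - (starRingEnd ℂ) a * z) / (z - a)‖ := by
  rcases eq_or_ne z a with rfl | h
  · simp
  · apply Real.log_nonneg
    rw [norm_div, one_le_div (norm_pos_iff.2 (sub_ne_zero.2 h))]
    exact aux_ge_one a z ha hz

lemma aux_near (s : ℝ) (hs : 0 < s) (a z : ℂ) (ha : ‖a‖ < 1) (hz : ‖z‖ < 1) (h : ‖z - a‖ < (1 - ‖a‖) / 2) :
    (Real.log ‖(1 - (starRingEnd ℂ) a * z) / (z - a)‖) ^ s ≤ s ^ s * (3 * (1 - ‖a‖) / ‖z - a‖) := by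
  have h1 : ‖1 - (starRingEnd ℂ) a * z‖ ≤ 3 * (1 - ‖a‖) := by
    apply (sq_le_sq₀ (norm_nonneg _) (by linarith)).1
    rw [aux_id]
    have hz' : ‖a‖ - ‖z‖ ≤ ‖z - a‖ := by rw [norm_sub_rev]; exact norm_sub_norm_le a z
    have h0 := norm_nonneg a
    have h0' := norm_nonneg z
    have h0'' := norm_nonneg (z - a)
    have e1 : ‖z - a‖ ^ 2 ≤ ((1 - ‖a‖) / 2) ^ 2 := by gcongr
    have e2 : 1 - ‖a‖ ^ 2 ≤ 2 * (1 - ‖a‖) := by nlinarith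
    have e3 : 1 - ‖z‖ ^ 2 ≤ 3 * (1 - ‖a‖) := by nlinarith
    have e4 : 0 ≤ 1 - ‖z‖ ^ 2 := by nlinarith
    have e5 : (1 - ‖a‖ ^ 2) * (1 - ‖z‖ ^ 2) ≤ (2 * (1 - ‖a‖)) * (3 * (1 - ‖a‖)) := by
      apply mul_le_mul e2 e3 e4 (by linarith)
    nlinarith
  have hx : 0 ≤ ‖(1 - (starRingEnd ℂ) a * z) / (z - a)‖ := norm_nonneg _
  have h2 := Real.log_le_rpow_div hx (one_div_pos.2 hs)
  calc _ ≤ (‖(1 - (starRingEnd ℂ) a * z) / (z - a)‖ ^ (1 / s) / (1 / s)) ^ s :=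
        Real.rpow_le_rpow (aux_log_nonneg a z ha hz) h2 hs.le
    _ = s ^ s * ‖(1 - (starRingEnd ℂ) a * z) / (z - a)‖ := by
        rw [div_div_eq_mul_div, div_one, Real.mul_rpow (by positivity) hs.le, ← Real.rpow_mul hx,
          one_div_mul_cancel hs.ne', Real.rpow_one, mul_comm]
    _ ≤ _ := by
        rw [norm_div]
        gcongr

lemma aux_far (s : ℝ) (hs : 0 < s) (a z : ℂ) (ha : ‖a‖ < 1) (hz : ‖z‖ < 1) (h : (1 - ‖a‖) / 2 ≤ ‖z - a‖) :
    (Real.log ‖(1 - (starRingEnd ℂ) a * z) / (z - a)‖) ^ s ≤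
      (50 * ((1 - ‖a‖) * (1 - ‖z‖) / ((1 - ‖a‖) + (1 - ‖z‖)) ^ 2)) ^ s := by
  refine Real.rpow_le_rpow (aux_log_nonneg a z ha hz) ?_ hs.le
  have hd : 0 < ‖z - a‖ := by linarith
  have hn : 0 < ‖1 - (starRingEnd ℂ) a * z‖ := hd.trans_le (aux_ge_one a z ha hz)
  have hx : 0 < ‖(1 - (starRingEnd ℂ) a * z) / (z - a)‖ := by rw [norm_div]; positivity
  have h1 : 2 * Real.log ‖(1 - (starRingEnd ℂ) a * z) / (z - a)‖ ≤ ‖(1 - (starRingEnd ℂ) a * z) / (z - a)‖ ^ 2 - 1 := by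
    have := Real.log_le_sub_one_of_pos (pow_pos hx 2)
    rwa [Real.log_pow] at this
  have h2 : ‖(1 - (starRingEnd ℂ) a * z) / (z - a)‖ ^ 2 - 1 = (1 - ‖a‖ ^ 2) * (1 - ‖z‖ ^ 2) / ‖z - a‖ ^ 2 := by
    rw [norm_div, div_pow, aux_id]; field_simp; ring
  have hz' : ‖a‖ - ‖z‖ ≤ ‖z - a‖ := by rw [norm_sub_rev]; exact norm_sub_norm_le a z
  have h0 := norm_nonneg a
  have h0' := norm_nonneg z
  have h3 : (1 - ‖a‖ ^ 2) * (1 - ‖z‖ ^ 2) ≤ (2 * (1 - ‖a‖)) * (2 * (1 - ‖z‖)) := by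
    apply mul_le_mul <;> nlinarith
  have h4 : ((1 - ‖a‖) + (1 - ‖z‖)) ≤ 5 * ‖z - a‖ := by linarith
  have h5 : (1 - ‖a‖ ^ 2) * (1 - ‖z‖ ^ 2) / ‖z - a‖ ^ 2 ≤ (2 * (1 - ‖a‖)) * (2 * (1 - ‖z‖)) / (((1 - ‖a‖) + (1 - ‖z‖)) / 5) ^ 2 := by
    apply div_le_div₀ _ h3
    · have : 0 < (1 - ‖a‖) + (1 - ‖z‖) := by linarith
      positivity
    · have : 0 < (1 - ‖a‖) + (1 - ‖z‖) := by linarith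
      gcongr; linarith
    · have := sub_pos.2 ha
      have := sub_pos.2 hz
      positivity
  have h6 : (2 * (1 - ‖a‖)) * (2 * (1 - ‖z‖)) / (((1 - ‖a‖) + (1 - ‖z‖)) / 5) ^ 2 =
     2 * (50 * ((1 - ‖a‖) * (1 - ‖z‖) / ((1 - ‖a‖) + (1 - ‖z‖)) ^ 2)) := by
    have : 0 < (1 - ‖a‖) + (1 - ‖z‖) := by linarith
    field_simp; ring
  linarith

lemma aux_1d (s : ℝ) (hs : 0 < s) (ρ : ℝ) (hρ : 0 < ρ) :
    ∫⁻ t in Ioi (0:ℝ), ENNReal.ofReal ((ρ * t / (ρ + t) ^ 2) ^ s / t) ≤ ENNReal.ofReal (2 / s) := by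
  have hb : ∀ t : ℝ, 0 < t → (ρ * t / (ρ + t) ^ 2) ^ s / t ≤ ρ ^ (-s) * t ^ (s - 1) := by
    intro t ht
    have : ρ ^ (-s) * t ^ (s - 1) = (t / ρ) ^ s / t := by
      rw [Real.rpow_sub ht, Real.rpow_one, Real.div_rpow ht.le hρ.le, Real.rpow_neg hρ.le]; field_simp
    rw [this]
    gcongr ?_ ^ s / _
    rw [div_le_div_iff₀ (by positivity) hρ]
    nlinarith [mul_pos hρ ht, mul_pos ht ht, mul_pos (mul_pos ht ht) ht, mul_pos (mul_pos ht ht) hρ]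
  have hb2 : ∀ t : ℝ, 0 < t → (ρ * t / (ρ + t) ^ 2) ^ s / t ≤ ρ ^ s * t ^ (-s - 1) := by
    intro t ht
    have : ρ ^ s * t ^ (-s - 1) = (ρ / t) ^ s / t := by
      rw [Real.rpow_sub ht, Real.rpow_one, Real.div_rpow hρ.le ht.le, Real.rpow_neg ht.le]; field_simp
    rw [this]
    gcongr ?_ ^ s / _
    rw [div_le_div_iff₀ (by positivity) ht]
    nlinarith [mul_pos hρ ht, mul_pos hρ hρ, mul_pos (mul_pos hρ hρ) hρ, mul_pos (mul_pos hρ hρ) ht]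
  have e : Ioi (0:ℝ) = Ioc 0 ρ ∪ Ioi ρ := (Ioc_union_Ioi_eq_Ioi hρ.le).symm
  have I1 : ∫⁻ t in Ioc 0 ρ, ENNReal.ofReal ((ρ * t / (ρ + t) ^ 2) ^ s / t) ≤ ENNReal.ofReal (1 / s) := by
    calc _ ≤ ∫⁻ t in Ioc 0 ρ, ENNReal.ofReal (ρ ^ (-s) * t ^ (s - 1)) :=
          setLIntegral_mono' measurableSet_Ioc fun t ht => ENNReal.ofReal_le_ofReal (hb t ht.1)
      _ = ENNReal.ofReal (∫ t in Ioc 0 ρ, ρ ^ (-s) * t ^ (s - 1)) := by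
          rw [ofReal_integral_eq_lintegral_ofReal]
          · have := (intervalIntegral.intervalIntegrable_rpow' (a := 0) (b := ρ) (r := s - 1) (by linarith)).const_mul (ρ ^ (-s))
            exact (intervalIntegrable_iff_integrableOn_Ioc_of_le hρ.le).1 this
          · filter_upwards [ae_restrict_mem measurableSet_Ioc] with t ht
            have := ht.1
            show (0:ℝ) ≤ _
            positivity
      _ = _ := by
          rw [← intervalIntegral.integral_of_le hρ.le, intervalIntegral.integral_const_mul, integral_rpow (by left; linarith)]
          congr 1
          rw [sub_add_cancel, Real.zero_rpow hs.ne', sub_zero, Real.rpow_neg hρ.le]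
          have := Real.rpow_pos_of_pos hρ s
          field_simp
  have I2 : ∫⁻ t in Ioi ρ, ENNReal.ofReal ((ρ * t / (ρ + t) ^ 2) ^ s / t) ≤ ENNReal.ofReal (1 / s) := by
    calc _ ≤ ∫⁻ t in Ioi ρ, ENNReal.ofReal (ρ ^ s * t ^ (-s - 1)) :=
          setLIntegral_mono' measurableSet_Ioi fun t ht => ENNReal.ofReal_le_ofReal (hb2 t (hρ.trans ht))
      _ = ENNReal.ofReal (∫ t in Ioi ρ, ρ ^ s * t ^ (-s - 1)) := by
          rw [ofReal_integral_eq_lintegral_ofReal]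
          · exact (integrableOn_Ioi_rpow_of_lt (by linarith) hρ).const_mul _
          · filter_upwards [ae_restrict_mem measurableSet_Ioi] with t ht
            have : 0 < t := hρ.trans ht
            show (0:ℝ) ≤ _
            positivity
      _ = _ := by
          rw [integral_const_mul, integral_Ioi_rpow_of_lt (by linarith) hρ]
          congr 1
          rw [sub_add_cancel, Real.rpow_neg hρ.le]
          have := Real.rpow_pos_of_pos hρ s
          field_simp
  rw [e]
  calc _ ≤ _ := lintegral_union_le _ _ _
    _ ≤ _ := add_le_add I1 I2
    _ = _ := by rw [← ENNReal.ofReal_add (by positivity) (by positivity)]; congr 1; ring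

lemma aux_far_int (s : ℝ) (hs : 0 < s) (C : ℝ) (F : ℂ → ℂ) (hFm : Measurable F) (ρ : ℝ) (hρ : 0 < ρ)
    (hM : ∀ r ∈ Ioo (0:ℝ) 1, ∫⁻ θ in Ioo (-Real.pi) Real.pi, ENNReal.ofReal (‖F (circleMap 0 r θ)‖ ^ 2) ≤
      ENNReal.ofReal (2 * Real.pi * (C ^ 2 / (1 - r)))) :
    ∫⁻ z in ball (0:ℂ) 1, ENNReal.ofReal (‖F z‖ ^ 2 * (50 * (ρ * (1 - ‖z‖) / (ρ + (1 - ‖z‖)) ^ 2)) ^ s) ≤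
      ENNReal.ofReal (2 * Real.pi * C ^ 2 * 50 ^ s) * ENNReal.ofReal (2 / s) := by
  have hk : ∀ r ∈ Ioo (0:ℝ) 1, 0 ≤ (50 * (ρ * (1 - r) / (ρ + (1 - r)) ^ 2)) ^ s := by
    intro r hr
    have : 0 < 1 - r := sub_pos.2 hr.2
    positivity
  rw [aux_polar _ (by fun_prop)]
  have hpt : ∀ r ∈ Ioo (0:ℝ) 1,
      ENNReal.ofReal r * ∫⁻ θ in Ioo (-Real.pi) Real.pi, ENNReal.ofReal (‖F (circleMap 0 r θ)‖ ^ 2 *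
        (50 * (ρ * (1 - ‖circleMap 0 r θ‖) / (ρ + (1 - ‖circleMap 0 r θ‖)) ^ 2)) ^ s) ≤
      ENNReal.ofReal (2 * Real.pi * C ^ 2 * 50 ^ s) *
        ENNReal.ofReal ((ρ * (1 - r) / (ρ + (1 - r)) ^ 2) ^ s / (1 - r)) := by
    intro r hr
    have h1r : 0 < 1 - r := sub_pos.2 hr.2
    have hnorm : ∀ θ, ‖circleMap 0 r θ‖ = r := fun θ => by simp [abs_of_pos hr.1]
    simp_rw [hnorm]
    have : ∀ θ, ENNReal.ofReal (‖F (circleMap 0 r θ)‖ ^ 2 * (50 * (ρ * (1 - r) / (ρ + (1 - r)) ^ 2)) ^ s)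
       = ENNReal.ofReal (‖F (circleMap 0 r θ)‖ ^ 2) * ENNReal.ofReal ((50 * (ρ * (1 - r) / (ρ + (1 - r)) ^ 2)) ^ s) := fun θ =>
      ENNReal.ofReal_mul (by positivity)
    simp_rw [this]
    rw [lintegral_mul_const' _ _ ENNReal.ofReal_ne_top]
    calc _ ≤ 1 * (ENNReal.ofReal (2 * Real.pi * (C ^ 2 / (1 - r))) * ENNReal.ofReal ((50 * (ρ * (1 - r) / (ρ + (1 - r)) ^ 2)) ^ s)) := by
          gcongr
          · exact ENNReal.ofReal_le_one.2 hr.2.le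
          · exact hM r hr
      _ = _ := by
          rw [one_mul, ← ENNReal.ofReal_mul (by positivity), ← ENNReal.ofReal_mul (by positivity),
            Real.mul_rpow (by norm_num) (by positivity)]
          congr 1
          field_simp
  calc _ ≤ ∫⁻ r in Ioo (0:ℝ) 1, ENNReal.ofReal (2 * Real.pi * C ^ 2 * 50 ^ s) *
        ENNReal.ofReal ((ρ * (1 - r) / (ρ + (1 - r)) ^ 2) ^ s / (1 - r)) := setLIntegral_mono' measurableSet_Ioo hpt
    _ = ENNReal.ofReal (2 * Real.pi * C ^ 2 * 50 ^ s) *  ∫⁻ r in Ioo (0:ℝ) 1,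
        ENNReal.ofReal ((ρ * (1 - r) / (ρ + (1 - r)) ^ 2) ^ s / (1 - r)) := lintegral_const_mul' _ _ ENNReal.ofReal_ne_top
    _ ≤ _ := by
      gcongr
      refine le_trans ?_ (aux_1d s hs ρ hρ)
      rw [← lintegral_indicator measurableSet_Ioo, ← lintegral_indicator measurableSet_Ioi,
        ← lintegral_sub_left_eq_self _ (1:ℝ)]
      apply lintegral_mono
      intro r
      by_cases h : 1 - r ∈ Ioo (0:ℝ) 1
      · have h2 : r ∈ Ioi (0:ℝ) := by have := h.2; simp only [mem_Ioi]; linarith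
        beta_reduce; rw [indicator_of_mem h, indicator_of_mem h2, _root_.sub_sub_cancel]
      · simp [indicator_of_notMem h]

lemma aux_near_int (w : ℂ) (R K : ℝ) (hK : 0 ≤ K) (hR : 0 < R) :
    ∫⁻ z in ball w R, ENNReal.ofReal (K / ‖z - w‖) ≤ ENNReal.ofReal (2 * Real.pi * K * R) := by
  rw [aux_polar _ (by fun_prop)]
  calc _ ≤ ∫⁻ r in Ioo (0:ℝ) R, ENNReal.ofReal (2 * Real.pi * K) := by
        refine setLIntegral_mono' measurableSet_Ioo fun r hr => ?_
        have hr0 := hr.1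
        have hnorm : ∀ θ, ‖circleMap w r θ - w‖ = r := fun θ => by simp [circleMap_sub_center, abs_of_pos hr.1]
        simp_rw [hnorm]
        rw [setLIntegral_const, Real.volume_Ioo, ← ENNReal.ofReal_mul (by positivity), ← ENNReal.ofReal_mul (by positivity)]
        apply ENNReal.ofReal_le_ofReal
        apply le_of_eq
        field_simp; ring
    _ = _ := by
        rw [setLIntegral_const, Real.volume_Ioo, sub_zero, ← ENNReal.ofReal_mul (by positivity)]

lemma aux_back (s : ℝ) (hs : 0 < s) (a : ℕ → ℝ)
    (hmono : Antitone a) (hnonneg : ∀ n, 0 ≤ a n) (f : ℂ → ℂ)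
    (hf : ∀ z ∈ ball (0:ℂ) 1, f z = ∑' n : ℕ, (a n : ℂ) * z ^ n)
    (C : ℝ) (hC : 0 < C) (hb : ∀ n : ℕ, 1 ≤ n → a n ≤ C / n) : MemQs s f := by
  have hD := aux_deriv a hmono hnonneg f hf
  refine ⟨fun z hz => (hD z hz).1.differentiableWithinAt, ?_⟩
  have hbn : ∀ n : ℕ, ‖(((n + 1 : ℝ) * a (n + 1) : ℝ) : ℂ)‖ ≤ C := by
    intro n
    rw [Complex.norm_real, Real.norm_of_nonneg (mul_nonneg (by positivity) (hnonneg _))]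
    have := hb (n + 1) (by omega)
    rw [le_div_iff₀ (by positivity)] at this
    push_cast at this
    linarith
  have hbl : ∀ z ∈ ball (0:ℂ) 1, ‖deriv f z‖ ≤ C / (1 - ‖z‖) := by
    intro z hz
    have hz1 : ‖z‖ < 1 := by simpa using hz
    have h1 := (hasSum_geometric_of_lt_one (norm_nonneg z) hz1).mul_left C
    rw [← (hD z hz).2.tsum_eq, div_eq_mul_inv]
    refine tsum_of_norm_bounded h1 fun n => ?_
    rw [norm_mul, norm_pow]
    gcongr
    exact hbn n
  have hM : ∀ r ∈ Ioo (0:ℝ) 1, ∫⁻ θ in Ioo (-Real.pi) Real.pi, ENNReal.ofReal (‖deriv f (circleMap 0 r θ)‖ ^ 2) ≤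
      ENNReal.ofReal (2 * Real.pi * (C ^ 2 / (1 - r))) := by
    intro r hr
    refine aux_parseval (fun n : ℕ => (((n + 1 : ℝ) * a (n + 1) : ℝ) : ℂ)) r _ (deriv f) (fun θ => ?_) fun N => ?_
    · refine (hD _ ?_).2
      simp [abs_of_pos hr.1, hr.2]
    · have h1 := (hasSum_geometric_of_lt_one hr.1.le hr.2).mul_left (C ^ 2)
      rw [div_eq_mul_inv]
      refine le_trans (Finset.sum_le_sum fun n _ => ?_) (sum_le_hasSum (Finset.range N) (fun n _ => ?_) h1)
      · rw [norm_mul, mul_pow, norm_pow, Complex.norm_real r, Real.norm_of_nonneg hr.1.le]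
        have h2 : r ^ n ≤ 1 := pow_le_one₀ hr.1.le hr.2.le
        have h3 : 0 ≤ r ^ n := pow_nonneg hr.1.le n
        have h4 := hbn n
        gcongr
        nlinarith
      · have := hr.1
        positivity
  have hmain : ∀ w ∈ ball (0:ℂ) 1, qsInt s f w ≤ (ENNReal.ofReal Real.pi)⁻¹ *
      (ENNReal.ofReal (2 * Real.pi * C ^ 2 * 50 ^ s) * ENNReal.ofReal (2 / s) + ENNReal.ofReal (12 * Real.pi * C ^ 2 * s ^ s)) := by
    intro w hw
    have hw1 : ‖w‖ < 1 := by simpa using hw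
    have hρ : 0 < 1 - ‖w‖ := sub_pos.2 hw1
    unfold qsInt
    gcongr
    have hsub : ball (0:ℂ) 1 ⊆ (ball (0:ℂ) 1 \ ball w ((1 - ‖w‖) / 2)) ∪ ball w ((1 - ‖w‖) / 2) := by
      rw [sdiff_union_self]; exact subset_union_left
    refine (lintegral_mono_set hsub).trans ((lintegral_union_le _ _ _).trans (add_le_add ?_ ?_))
    · calc _ ≤ ∫⁻ z in ball (0:ℂ) 1 \ ball w ((1 - ‖w‖) / 2), ENNReal.ofReal (‖deriv f z‖ ^ 2 * (50 * ((1 - ‖w‖) * (1 - ‖z‖) / ((1 - ‖w‖) + (1 - ‖z‖)) ^ 2)) ^ s) := by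
            refine setLIntegral_mono' (measurableSet_ball.diff measurableSet_ball) fun z hz => ?_
            apply ENNReal.ofReal_le_ofReal
            gcongr ?_ * ?_
            refine aux_far s hs w z hw1 (by simpa using hz.1) ?_
            simpa [mem_ball, dist_eq_norm] using hz.2
        _ ≤ _ := lintegral_mono_set sdiff_subset
        _ ≤ _ := aux_far_int s hs C (deriv f) (measurable_deriv f) (1 - ‖w‖) hρ hM
    · calc _ ≤ ∫⁻ z in ball w ((1 - ‖w‖) / 2), ENNReal.ofReal ((12 * C ^ 2 * s ^ s / (1 - ‖w‖)) / ‖z - w‖) := by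
            refine setLIntegral_mono' measurableSet_ball fun z hz => ?_
            apply ENNReal.ofReal_le_ofReal
            have hz2 : ‖z - w‖ < (1 - ‖w‖) / 2 := by simpa [mem_ball, dist_eq_norm] using hz
            have hz3 : ‖z‖ - ‖w‖ ≤ ‖z - w‖ := norm_sub_norm_le z w
            have hz1 : ‖z‖ < 1 := by linarith
            have h1 := hbl z (by simpa using hz1)
            have h2 : ‖deriv f z‖ ≤ C / ((1 - ‖w‖) / 2) := by
              refine h1.trans ?_
              gcongr
              linarith
            calc _ ≤ (C / ((1 - ‖w‖) / 2)) ^ 2 * (s ^ s * (3 * (1 - ‖w‖) / ‖z - w‖)) := by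
                  gcongr ?_ ^ 2 * ?_
                  · exact Real.rpow_nonneg (aux_log_nonneg w z hw1 hz1) s
                  · exact aux_near s hs w z hw1 hz1 hz2
              _ = _ := by
                  field_simp; try ring
        _ ≤ _ := aux_near_int w _ _ (by positivity) (by linarith)
        _ = _ := by congr 1; field_simp; try ring
  refine lt_of_le_of_lt (iSup₂_le hmain) ?_
  refine ENNReal.mul_lt_top ?_ ?_
  · simp [Real.pi_pos]
  · exact ENNReal.add_lt_top.2 ⟨ENNReal.mul_lt_top ENNReal.ofReal_lt_top ENNReal.ofReal_lt_top, ENNReal.ofReal_lt_top⟩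

lemma aux_lower (s : ℝ) (hs : 0 < s) (f : ℂ → ℂ) (hd : DifferentiableOn ℂ f (ball (0:ℂ) 1)) (r : ℝ)
    (hr0 : 0 ≤ r) (hr1 : r < 1) :
    ENNReal.ofReal (((1 - r) / 4) ^ 2 * ‖deriv f r‖ ^ 2) ≤ qsInt s f r := by
  set R := (1 - r) / 4 with hR
  have hRp : 0 < R := by rw [hR]; linarith
  have hsub : ball (r:ℂ) R ⊆ ball 0 1 := by
    apply ball_subset_ball'
    simp [abs_of_nonneg hr0]; linarith
  have hd' : DifferentiableOn ℂ (deriv f) (ball (r:ℂ) R) := (hd.deriv isOpen_ball).mono hsub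
  have key : ENNReal.ofReal (Real.pi * (R ^ 2 * ‖deriv f r‖ ^ 2)) ≤ ∫⁻ z in ball (0:ℂ) 1,
    ENNReal.ofReal (‖deriv f z‖ ^ 2 * (Real.log ‖(1 - (starRingEnd ℂ) (r:ℂ) * z) / (z - r)‖) ^ s) := by
    refine le_trans ?_ (lintegral_mono_set hsub)
    have hm := measurable_deriv f
    rw [aux_polar _ (by fun_prop)]
    calc _ = ∫⁻ t in Ioo 0 R, ENNReal.ofReal (t * (2 * Real.pi * ‖deriv f r‖ ^ 2)) := by
          rw [← ofReal_integral_eq_lintegral_ofReal]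
          · congr 1
            rw [← integral_Ioc_eq_integral_Ioo, ← intervalIntegral.integral_of_le hRp.le,
              intervalIntegral.integral_mul_const, integral_id]
            ring
          · exact (Continuous.integrableOn_Icc (a := 0) (b := R) (by fun_prop)).mono_set Ioo_subset_Icc_self
          · filter_upwards [ae_restrict_mem measurableSet_Ioo] with t ht
            have := ht.1
            show (0:ℝ) ≤ _
            positivity
      _ ≤ _ := by
          refine setLIntegral_mono' measurableSet_Ioo fun t ht => ?_
          rw [ENNReal.ofReal_mul ht.1.le]
          gcongr
          refine (aux_mv (deriv f) r R t ht.1 ht.2 hd').trans ?_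
          apply lintegral_mono
          intro θ
          apply ENNReal.ofReal_le_ofReal
          apply le_mul_of_one_le_right (by positivity)
          apply Real.one_le_rpow _ hs.le
          have hn : ‖circleMap (r:ℂ) t θ - r‖ = t := by simp [circleMap_sub_center, abs_of_pos ht.1]
          have hz : ‖circleMap (r:ℂ) t θ‖ < 1 := by
            have : circleMap (r:ℂ) t θ ∈ ball (r:ℂ) R := by rw [mem_ball, dist_eq_norm, hn]; exact ht.2
            simpa using hsub this
          rw [norm_div, hn]
          have h4 : 4 * R ≤ ‖1 - (starRingEnd ℂ) (r:ℂ) * circleMap (r:ℂ) t θ‖ := by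
            rw [Complex.conj_ofReal]
            have h5 := norm_sub_norm_le (1:ℂ) ((r:ℂ) * circleMap (r:ℂ) t θ)
            rw [norm_one, norm_mul, Complex.norm_real, Real.norm_of_nonneg hr0] at h5
            have : r * ‖circleMap (r:ℂ) t θ‖ ≤ r * 1 := by gcongr
            rw [hR]; linarith
          have h6 : 4 ≤ ‖1 - (starRingEnd ℂ) (r:ℂ) * circleMap (r:ℂ) t θ‖ / t := by
            rw [le_div_iff₀ ht.1]
            linarith [ht.2]
          rw [Real.le_log_iff_exp_le (by linarith)]
          linarith [Real.exp_one_lt_d9]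
  unfold qsInt
  rw [ENNReal.ofReal_mul Real.pi_pos.le] at key
  have hpi0 : ENNReal.ofReal Real.pi ≠ 0 := by simp [Real.pi_pos]
  calc _ = (ENNReal.ofReal Real.pi)⁻¹ * (ENNReal.ofReal Real.pi * ENNReal.ofReal (R ^ 2 * ‖deriv f r‖ ^ 2)) := by
        rw [← mul_assoc, ENNReal.inv_mul_cancel hpi0 ENNReal.ofReal_ne_top, one_mul]
    _ ≤ _ := by gcongr

lemma aux_fwd (s : ℝ) (hs : 0 < s) (a : ℕ → ℝ)
    (hmono : Antitone a) (hnonneg : ∀ n, 0 ≤ a n) (f : ℂ → ℂ)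
    (hf : ∀ z ∈ ball (0:ℂ) 1, f z = ∑' n : ℕ, (a n : ℂ) * z ^ n)
    (h : MemQs s f) : ∃ C > 0, ∀ n : ℕ, 1 ≤ n → a n ≤ C / n := by
  obtain ⟨hd, hM⟩ := h
  set M := (⨆ a ∈ ball (0:ℂ) 1, qsInt s f a) with hMdef
  have hD := aux_deriv a hmono hnonneg f hf
  have hbd : ∀ r : ℝ, 0 ≤ r → r < 1 → (1 - r) / 4 * ‖deriv f r‖ ≤ Real.sqrt M.toReal := by
    intro r h0 h1
    have h2 : qsInt s f r ≤ M := le_iSup₂ (f := fun a (_ : a ∈ ball (0:ℂ) 1) => qsInt s f a) (r:ℂ) (by simp [abs_of_nonneg h0, h1])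
    have h3 := (aux_lower s hs f hd r h0 h1).trans h2
    apply Real.le_sqrt_of_sq_le
    rw [mul_pow]
    exact (ENNReal.ofReal_le_iff_le_toReal hM.ne).1 h3
  refine ⟨32 * Real.sqrt M.toReal + 1, by positivity, fun N hN => ?_⟩
  have hN' : (1:ℝ) ≤ N := by exact_mod_cast hN
  have hNp : (0:ℝ) < N := by linarith
  set r : ℝ := 1 - 1 / (2 * N) with hr
  have hi : 1 / (2 * (N:ℝ)) ≤ 1 / 2 := by
    apply one_div_le_one_div_of_le <;> linarith
  have hi0 : 0 < 1 / (2 * (N:ℝ)) := by positivity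
  have hr0 : 0 ≤ r := by rw [hr]; linarith
  have hr1 : r < 1 := by rw [hr]; linarith
  have hpow : 1 / 2 ≤ r ^ N := by
    have := one_add_mul_le_pow (a := -(1 / (2 * (N:ℝ)))) (by linarith) N
    have e : 1 + (N:ℝ) * -(1 / (2 * (N:ℝ))) = 1 / 2 := by field_simp; norm_num
    rw [e, ← sub_eq_add_neg] at this
    exact this
  have hsum := (hD r (by simp [abs_of_nonneg hr0, hr1])).2
  have hsumR : HasSum (fun n : ℕ => ((n + 1 : ℝ) * a (n + 1)) * r ^ n) (deriv f r).re := by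
    have := Complex.hasSum_re hsum
    refine this.congr_fun fun n => ?_
    norm_cast
  have h1 : ∑ n ∈ Finset.range N, ((n + 1 : ℝ) * a (n + 1)) * r ^ n ≤ (deriv f r).re :=
    sum_le_hasSum _ (fun n _ => mul_nonneg (mul_nonneg (by positivity) (hnonneg _)) (pow_nonneg hr0 n)) hsumR
  have h2 : ∑ n ∈ Finset.range N, ((n + 1 : ℝ) * (a N * (1 / 2))) ≤ ∑ n ∈ Finset.range N, ((n + 1 : ℝ) * a (n + 1)) * r ^ n := by
    refine Finset.sum_le_sum fun n hn => ?_
    rw [mul_assoc]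
    have hnN := Finset.mem_range.1 hn
    have e1 : a N ≤ a (n + 1) := hmono hnN
    have e2 : 1 / 2 ≤ r ^ n := hpow.trans (pow_le_pow_of_le_one hr0 hr1.le hnN.le)
    gcongr
    exact hnonneg _
  have h3 : (N:ℝ) ^ 2 / 2 ≤ ∑ n ∈ Finset.range N, (n + 1 : ℝ) := by
    clear * -
    induction N with
    | zero => simp
    | succ k ih => rw [Finset.sum_range_succ]; push_cast; nlinarith
  rw [← Finset.sum_mul] at h2
  have h4 : (N:ℝ) ^ 2 / 2 * (a N * (1 / 2)) ≤ ‖deriv f r‖ := by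
    refine le_trans ?_ (h2.trans (h1.trans (Complex.re_le_norm _)))
    gcongr
    exact mul_nonneg (hnonneg _) (by norm_num)
  have h5 := hbd r hr0 hr1
  have h6 : 1 - r = 1 / (2 * N) := by rw [hr]; ring
  rw [h6] at h5
  have h7 : 1 / (2 * (N:ℝ)) / 4 * ((N:ℝ) ^ 2 / 2 * (a N * (1 / 2))) ≤ Real.sqrt M.toReal :=
    le_trans (by gcongr) h5
  have h8 : 1 / (2 * (N:ℝ)) / 4 * ((N:ℝ) ^ 2 / 2 * (a N * (1 / 2))) = a N * N / 32 := by
    field_simp; ring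
  rw [le_div_iff₀ hNp]
  linarith

/-- Theorem 3.1: for a decreasing sequence of nonnegative numbers `(a_n)`, the function
`f(z) = ∑ a_n zⁿ` belongs to `Q_s` iff `a_n = O(1/n)`. -/
theorem memQs_iff_of_antitone (s : ℝ) (hs : 0 < s) (a : ℕ → ℝ)
    (hmono : Antitone a) (hnonneg : ∀ n, 0 ≤ a n) (f : ℂ → ℂ)
    (hf : ∀ z ∈ ball (0:ℂ) 1, f z = ∑' n : ℕ, (a n : ℂ) * z ^ n) :
    MemQs s f ↔ ∃ C > 0, ∀ n : ℕ, 1 ≤ n → a n ≤ C / n := by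
  exact ⟨aux_fwd s hs a hmono hnonneg f hf, fun ⟨C, hC, hb⟩ => aux_back s hs a hmono hnonneg f hf C hC hb⟩

end PaperHankel
end
end

section
/- Let μ be a finite positive Borel measure on [0,1). The following conditions are equivalent: (i) the operator I_μ is well defined on the Bloch space B and bounded from B into Λ²_{1/2}; (ii) the operator H_μ is well defined on the Bloch space B and bounded from B into Λ²_{1/2}; (iii) μ is a 1-logarithmic 1-Carleson measure; (iv) ∫_{[0,1)} t^n log(1/(1-t)) dμ(t) = O(1/n) as n → ∞. -/
open MeasureTheory Set Metric ENNReal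

noncomputable section

namespace PaperHankel

lemma le_of_sq {a b : ℝ} (h : a ^ 2 ≤ b ^ 2) (hb : 0 ≤ b) : a ≤ b :=
  (abs_le_of_sq_le_sq' h hb).2

lemma hasSum_tc {f : ℂ → ℂ} (hf : DifferentiableOn ℂ f (ball (0:ℂ) 1)) {z : ℂ}
    (hz : z ∈ ball (0:ℂ) 1) : HasSum (fun n => tc f n * z ^ n) (f z) := by
  have h := Complex.hasSum_taylorSeries_on_ball hf hz
  have e : (fun n => tc f n * z ^ n) =
      (fun n : ℕ => (n.factorial : ℂ)⁻¹ • (z - 0) ^ n • iteratedDeriv n f 0) := by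
    funext n
    simp only [tc, smul_eq_mul, sub_zero]
    ring
  rw [e]
  exact h

lemma tc_deriv (f : ℂ → ℂ) (n : ℕ) : tc (deriv f) n = ((n:ℂ) + 1) * tc f (n + 1) := by
  have h : ((n:ℂ) + 1) ≠ 0 := by exact_mod_cast Nat.succ_ne_zero n
  have h2 : ((n.factorial : ℕ) : ℂ) ≠ 0 := by exact_mod_cast n.factorial_ne_zero
  simp only [tc, iteratedDeriv_succ', Nat.factorial_succ]
  push_cast
  field_simp

lemma of_hasSum {f : ℂ → ℂ} {b : ℕ → ℂ}
    (h : ∀ z ∈ ball (0:ℂ) 1, HasSum (fun n => b n * z ^ n) (f z)) :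
    DifferentiableOn ℂ f (ball (0:ℂ) 1) ∧ ∀ n, tc f n = b n := by
  have hp : HasFPowerSeriesOnBall f (FormalMultilinearSeries.ofScalars ℂ b) 0 1 := by
    refine ⟨?_, one_pos, ?_⟩
    · refine ENNReal.le_of_forall_nnreal_lt fun r hr => ?_
      have hr1 : (r:ℝ) < 1 := by exact_mod_cast hr
      apply FormalMultilinearSeries.le_radius_of_summable
      have h1 := (h (r:ℂ) (by simpa using hr1)).summable.norm
      refine h1.congr fun n => ?_
      simp
    · intro y hy
      have hy' : y ∈ ball (0:ℂ) 1 := by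
        simpa [← ENNReal.ofReal_one, Metric.eball_ofReal] using hy
      have := h y hy'
      simp only [zero_add]
      convert! this using 2 with n
      rw [FormalMultilinearSeries.ofScalars_apply_eq]
      simp
  have hd : DifferentiableOn ℂ f (ball (0:ℂ) 1) := by
    have := hp.differentiableOn
    rwa [← ENNReal.ofReal_one, Metric.eball_ofReal] at this
  refine ⟨hd, fun n => ?_⟩
  have h1 := hp.factorial_smul (1:ℂ) n
  rw [FormalMultilinearSeries.ofScalars_apply_eq] at h1
  have h2 : ((n.factorial : ℕ) : ℂ) ≠ 0 := by exact_mod_cast n.factorial_ne_zero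
  rw [tc, iteratedDeriv_eq_iteratedFDeriv]
  rw [div_eq_iff h2]
  rw [← h1]
  simp [mul_comm]

lemma parseval {b : ℕ → ℂ} (hb : Summable fun n => ‖b n‖) {G : ℝ → ℂ}
    (hG : ∀ θ : ℝ, HasSum (fun n => b n * Complex.exp (θ * Complex.I) ^ n) (G θ)) :
    HasSum (fun n => ‖b n‖ ^ 2)
      ((2 * Real.pi)⁻¹ * ∫ θ in (0:ℝ)..(2 * Real.pi), ‖G θ‖ ^ 2) := by
  have hpoly : ∀ N : ℕ, ∑ n ∈ Finset.range N, ‖b n‖ ^ 2 = (2 * Real.pi)⁻¹ *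
      ∫ θ in (0:ℝ)..(2 * Real.pi),
        ‖∑ n ∈ Finset.range N, b n * Complex.exp (θ * Complex.I) ^ n‖ ^ 2 := by
    intro N
    have h := Polynomial.sum_sq_norm_coeff_eq_circleAverage
      (∑ n ∈ Finset.range N, Polynomial.C (b n) * Polynomial.X ^ n)
    have hc : ∀ i, (∑ n ∈ Finset.range N, Polynomial.C (b n) * Polynomial.X ^ n).coeff i
        = if i ∈ Finset.range N then b i else 0 := by
      intro i
      simp [Polynomial.coeff_C_mul, Polynomial.coeff_X_pow]
    rw [Finset.sum_subset (s₂ := Finset.range N)] at h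
    · rw [Finset.sum_congr rfl (fun i hi => by rw [hc, if_pos hi])] at h
      rw [h, Real.circleAverage]
      simp [circleMap, Polynomial.eval_finsetSum]
    · intro i hi
      by_contra hN
      rw [Polynomial.mem_support_iff, hc, if_neg hN] at hi
      exact hi rfl
    · intro i _ hi
      rw [Polynomial.notMem_support_iff] at hi
      rw [hi]; simp
  have hs : Summable fun n => ‖b n‖ ^ 2 := by
    have : ∀ᶠ n in Filter.atTop, ‖b n‖ < 1 :=
      hb.tendsto_atTop_zero.eventually (gt_mem_nhds one_pos)
    refine Summable.of_norm_bounded_eventually_nat hb ?_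
    filter_upwards [this] with n hn
    have := norm_nonneg (b n)
    rw [Real.norm_of_nonneg (by positivity)]
    nlinarith
  have hlim : Filter.Tendsto (fun N : ℕ => ∑ n ∈ Finset.range N, ‖b n‖ ^ 2) Filter.atTop
      (nhds ((2 * Real.pi)⁻¹ * ∫ θ in (0:ℝ)..(2 * Real.pi), ‖G θ‖ ^ 2)) := by
    simp_rw [hpoly]
    refine Filter.Tendsto.const_mul _ ?_
    refine intervalIntegral.tendsto_integral_filter_of_dominated_convergence
      (fun _ => (∑' n, ‖b n‖) ^ 2) ?_ ?_ ?_ ?_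
    · refine Filter.Eventually.of_forall fun N => ?_
      refine Continuous.aestronglyMeasurable ?_
      fun_prop
    · refine Filter.Eventually.of_forall fun N => Filter.Eventually.of_forall fun θ _ => ?_
      rw [Real.norm_of_nonneg (by positivity)]
      gcongr
      refine (norm_sum_le _ _).trans ?_
      refine le_trans (Finset.sum_le_sum fun n _ => ?_)
        (hb.sum_le_tsum (Finset.range N) (fun _ _ => norm_nonneg _))
      simp [Complex.norm_exp_ofReal_mul_I]
    · simp
    · refine Filter.Eventually.of_forall fun θ _ => ?_
      exact ((hG θ).tendsto_sum_nat.norm).pow 2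
  rw [hs.hasSum_iff_tendsto_nat]
  exact hlim

lemma M2_hasSum {f : ℂ → ℂ} (hf : DifferentiableOn ℂ f (ball (0:ℂ) 1)) {r : ℝ}
    (hr : r ∈ Ico (0:ℝ) 1) :
    HasSum (fun n : ℕ => ((n:ℝ) + 1) ^ 2 * ‖tc f (n+1)‖ ^ 2 * r ^ (2 * n))
      (M2 (deriv f) r ^ 2) := by
  have hd : DifferentiableOn ℂ (deriv f) (ball (0:ℂ) 1) := hf.deriv isOpen_ball
  have hrb : (r:ℂ) ∈ ball (0:ℂ) 1 := by simp [abs_of_nonneg hr.1, hr.2]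
  have hsum : Summable fun n => ‖tc (deriv f) n * (r:ℂ) ^ n‖ := (hasSum_tc hd hrb).summable.norm
  have h := parseval (b := fun n => tc (deriv f) n * (r:ℂ) ^ n) hsum
    (G := fun θ => deriv f (r * Complex.exp (θ * Complex.I))) (by
      intro θ
      have := hasSum_tc hd (z := r * Complex.exp (θ * Complex.I))
        (by simp [abs_of_nonneg hr.1, hr.2, Complex.norm_exp_ofReal_mul_I])
      convert this using 2 with n
      rw [mul_pow]; ring)
  rw [M2, Real.sq_sqrt]
  · convert h using 2 with n
    rw [tc_deriv]
    have : ‖(n:ℂ) + 1‖ = (n:ℝ) + 1 := by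
      rw [← Nat.cast_add_one, Complex.norm_natCast]; simp
    simp only [norm_mul, norm_pow, this, Complex.norm_real, Real.norm_of_nonneg hr.1]
    ring
  · have : 0 ≤ Real.pi := Real.pi_pos.le
    refine mul_nonneg (by positivity) ?_
    exact intervalIntegral.integral_nonneg (by positivity) (fun _ _ => by positivity)

lemma M2_nonneg (f : ℂ → ℂ) (r : ℝ) : 0 ≤ M2 f r := Real.sqrt_nonneg _

lemma lambda_upper {f : ℂ → ℂ} (hf : DifferentiableOn ℂ f (ball (0:ℂ) 1)) {K : ℝ} (hK : 0 ≤ K)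
    (h : ∀ n : ℕ, ((n:ℝ) + 1) * ‖tc f (n+1)‖ ≤ K) :
    MemLambda f ∧ lambdaNorm f ≤ ‖f 0‖ + K := by
  have key : ∀ r ∈ Ico (0:ℝ) 1, Real.sqrt (1 - r) * M2 (deriv f) r ≤ K := by
    intro r hr
    have h1 := M2_hasSum hf hr
    have hr2 : r ^ 2 < 1 := by have := hr.1; have := hr.2; nlinarith
    have h2 := (hasSum_geometric_of_lt_one (sq_nonneg r) hr2).mul_left (K ^ 2)
    have h3 : M2 (deriv f) r ^ 2 ≤ K ^ 2 * (1 - r ^ 2)⁻¹ := by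
      refine hasSum_le (fun n => ?_) h1 h2
      rw [← pow_mul]
      have := hr.1
      gcongr
      rw [← mul_pow]
      gcongr
      exact h n
    have h4 : (1 - r) * M2 (deriv f) r ^ 2 ≤ K ^ 2 := by
      have h0 : 0 < 1 - r ^ 2 := by linarith
      have h01 : 0 ≤ 1 - r := by linarith [hr.2]
      calc (1 - r) * M2 (deriv f) r ^ 2 ≤ (1 - r ^ 2) * (K ^ 2 * (1 - r ^ 2)⁻¹) := by
            gcongr
            have := hr.1; have := hr.2; nlinarith
        _ = K ^ 2 := by field_simp
    refine le_of_sq ?_ hK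
    rw [mul_pow, Real.sq_sqrt (by linarith [hr.2])]
    exact h4
  refine ⟨⟨hf, K, key⟩, ?_⟩
  unfold lambdaNorm
  gcongr
  refine csSup_le ⟨_, 0, by simp, rfl⟩ ?_
  rintro x ⟨r, hr, rfl⟩
  exact key r hr

lemma lambda_lower {f : ℂ → ℂ} (hf : MemLambda f) {c : ℕ → ℝ} (hc : Antitone c)
    (hc0 : ∀ n, 0 ≤ c n) (h : ∀ n, tc f n = (c n : ℂ)) :
    ∃ C > 0, ∀ n : ℕ, 1 ≤ n → c n ≤ C / n := by
  obtain ⟨hd, C, hC⟩ := hf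
  have hC0 : 0 ≤ C := le_trans (by simpa using M2_nonneg (deriv f) 0) (hC 0 (by simp))
  refine ⟨5 * Real.exp 1 * (C + 1), by positivity, ?_⟩
  intro N hN
  have hN1 : (1:ℝ) ≤ N := by exact_mod_cast hN
  set r : ℝ := N / (N + 1) with hrdef
  have hr : r ∈ Ico (0:ℝ) 1 := by
    refine ⟨by positivity, ?_⟩
    rw [hrdef, div_lt_one (by positivity)]; linarith
  have h1r : 1 - r = 1 / (N + 1) := by rw [hrdef]; field_simp; ring
  have h1 := M2_hasSum hd hr
  have h2 : M2 (deriv f) r ^ 2 ≤ C ^ 2 * (N + 1) := by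
    have h3 := pow_le_pow_left₀ (mul_nonneg (Real.sqrt_nonneg _) (M2_nonneg _ _)) (hC r hr) 2
    rw [mul_pow, Real.sq_sqrt (by linarith [hr.2]), h1r, one_div, inv_mul_le_iff₀ (by positivity)] at h3
    linarith
  have hexp : (Real.exp 1)⁻¹ ≤ r ^ N := by
    have h5 : (1 + 1 / (N:ℝ)) ^ N ≤ Real.exp 1 := by
      have := Real.add_one_le_exp (1 / (N:ℝ))
      calc (1 + 1 / (N:ℝ)) ^ N ≤ (Real.exp (1 / N)) ^ N := by gcongr; linarith
        _ = Real.exp 1 := by rw [← Real.exp_nat_mul]; congr 1; field_simp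
    have h6 : r = (1 + 1 / (N:ℝ))⁻¹ := by rw [hrdef]; field_simp
    rw [h6, inv_pow]
    exact inv_anti₀ (by positivity) h5
  have h3 : ∑ n ∈ Finset.range N, ((n:ℝ) + 1) ^ 2 * (c N ^ 2 * ((Real.exp 1)⁻¹) ^ 2)
      ≤ M2 (deriv f) r ^ 2 := by
    refine le_trans (Finset.sum_le_sum fun n hn => ?_) (sum_le_hasSum (Finset.range N) (fun n _ => ?_) h1)
    · rw [Finset.mem_range] at hn
      rw [h, Complex.norm_real, Real.norm_of_nonneg (hc0 _), mul_assoc]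
      have : r ^ N ≤ r ^ n := pow_le_pow_of_le_one hr.1 hr.2.le hn.le
      have := hc0 N
      gcongr
      · exact hc (by omega)
      · rw [mul_comm 2 n, pow_mul]
        gcongr
        linarith
    · have := hr.1
      positivity
  have hcube : ∀ M : ℕ, (M:ℝ) ^ 3 / 3 ≤ ∑ n ∈ Finset.range M, ((n:ℝ) + 1) ^ 2 := by
    intro M
    induction M with
    | zero => simp
    | succ k ih => 
      rw [Finset.sum_range_succ]; push_cast
      have : (0:ℝ) ≤ k := by positivity
      nlinarith
  rw [← Finset.sum_mul] at h3
  have h4 : (N:ℝ) ^ 3 / 3 * (c N ^ 2 * ((Real.exp 1)⁻¹) ^ 2) ≤ C ^ 2 * (N + 1) := by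
    refine le_trans ?_ (h3.trans h2)
    gcongr
    exact hcube N
  have he : 0 < Real.exp 1 := Real.exp_pos 1
  rw [le_div_iff₀ (by positivity)]
  refine le_of_sq ?_ (by positivity)
  have h5 : (N:ℝ) ^ 3 * c N ^ 2 ≤ N * (6 * Real.exp 1 ^ 2 * C ^ 2) := by
    have e : (N:ℝ) ^ 3 / 3 * (c N ^ 2 * ((Real.exp 1)⁻¹) ^ 2)
      = (N:ℝ) ^ 3 * c N ^ 2 / (3 * Real.exp 1 ^ 2) := by field_simp
    rw [e, div_le_iff₀ (by positivity)] at h4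
    refine h4.trans ?_
    have : 0 ≤ C ^ 2 * Real.exp 1 ^ 2 := by positivity
    nlinarith
  have h6 : (N:ℝ) * ((c N * N) ^ 2) ≤ N * (6 * Real.exp 1 ^ 2 * C ^ 2) := by
    refine le_trans (le_of_eq ?_) h5
    ring
  have h7 := le_of_mul_le_mul_left h6 (by positivity)
  refine h7.trans ?_
  have : Real.exp 1 ^ 2 * C ^ 2 ≤ Real.exp 1 ^ 2 * (C + 1) ^ 2 := by gcongr; linarith
  have : 0 ≤ Real.exp 1 ^ 2 * (C + 1) ^ 2 := by positivity
  nlinarith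

lemma rho_nonneg (f : ℂ → ℂ) :
    0 ≤ sSup {x : ℝ | ∃ z ∈ ball (0:ℂ) 1, x = (1 - ‖z‖ ^ 2) * ‖deriv f z‖} := by
  refine Real.sSup_nonneg ?_
  rintro x ⟨z, hz, rfl⟩
  have : ‖z‖ < 1 := by simpa using hz
  have := norm_nonneg z
  refine mul_nonneg ?_ (norm_nonneg _)
  nlinarith

lemma bloch_le_rho {f : ℂ → ℂ} (hf : MemBloch f) {z : ℂ} (hz : z ∈ ball (0:ℂ) 1) :
    (1 - ‖z‖ ^ 2) * ‖deriv f z‖ ≤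
      sSup {x : ℝ | ∃ z ∈ ball (0:ℂ) 1, x = (1 - ‖z‖ ^ 2) * ‖deriv f z‖} := by
  obtain ⟨_, M, hM⟩ := hf
  refine le_csSup ⟨M, ?_⟩ ⟨z, hz, rfl⟩
  rintro x ⟨w, hw, rfl⟩
  exact hM w hw

lemma blochNorm_nonneg (f : ℂ → ℂ) : 0 ≤ blochNorm f :=
  add_nonneg (norm_nonneg _) (rho_nonneg f)

lemma ofReal_mem_ball {t : ℝ} (ht : t ∈ Ico (0:ℝ) 1) : (t:ℂ) ∈ ball (0:ℂ) 1 := by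
  simp [abs_of_nonneg ht.1, ht.2]

lemma log_nonneg' {t : ℝ} (ht : t ∈ Ico (0:ℝ) 1) : 0 ≤ Real.log (1 / (1 - t)) := by
  apply Real.log_nonneg
  rw [le_div_iff₀ (by linarith [ht.2])]
  linarith [ht.1]

lemma bloch_growth {f : ℂ → ℂ} (hf : MemBloch f) {t : ℝ} (ht : t ∈ Ico (0:ℝ) 1) :
    ‖f t‖ ≤ blochNorm f * (1 + Real.log (1 / (1 - t))) := by
  set ρ := sSup {x : ℝ | ∃ z ∈ ball (0:ℂ) 1, x = (1 - ‖z‖ ^ 2) * ‖deriv f z‖} with hρ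
  have hρ0 : 0 ≤ ρ := rho_nonneg f
  have hder : ∀ s ∈ Ico (0:ℝ) 1, HasDerivAt (fun s : ℝ => f s) (deriv f s) s := by
    intro s hs
    have h1 : DifferentiableAt ℂ f (s:ℂ) :=
      hf.1.differentiableAt (isOpen_ball.mem_nhds (ofReal_mem_ball hs))
    exact h1.hasDerivAt.comp_ofReal
  have hsub : ∀ s ∈ Icc (0:ℝ) t, s ∈ Ico (0:ℝ) 1 := fun s hs => ⟨hs.1, hs.2.trans_lt ht.2⟩
  have hB : ∀ s ∈ Ico (0:ℝ) 1, HasDerivAt (fun s : ℝ => ‖f 0‖ - ρ * Real.log (1 - s))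
      (ρ / (1 - s)) s := by
    intro s hs
    have h1 : HasDerivAt (fun s : ℝ => 1 - s) (-1) s := by
      simpa using (hasDerivAt_id s).const_sub 1
    have h2 := ((h1.log (by linarith [hs.2])).const_mul ρ).const_sub ‖f 0‖
    convert! h2 using 1
    ring
  have h := image_norm_le_of_norm_deriv_right_le_deriv_boundary' (a := 0) (b := t)
    (f := fun s : ℝ => f s) (f' := fun s : ℝ => deriv f s)
    (B := fun s : ℝ => ‖f 0‖ - ρ * Real.log (1 - s)) (B' := fun s => ρ / (1 - s))
    (fun s hs => (hder s (hsub s hs)).continuousAt.continuousWithinAt)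
    (fun s hs => (hder s (hsub s ⟨hs.1, hs.2.le⟩)).hasDerivWithinAt)
    (by simp)
    (fun s hs => (hB s (hsub s hs)).continuousAt.continuousWithinAt)
    (fun s hs => (hB s (hsub s ⟨hs.1, hs.2.le⟩)).hasDerivWithinAt)
    (by
      intro s hs
      have hs' := hsub s ⟨hs.1, hs.2.le⟩
      have h1 := bloch_le_rho hf (ofReal_mem_ball hs')
      rw [← hρ, Complex.norm_real, Real.norm_of_nonneg hs'.1] at h1
      rw [le_div_iff₀ (by linarith [hs'.2])]
      refine le_trans ?_ h1
      rw [mul_comm]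
      gcongr
      have := hs'.1; have := hs'.2
      nlinarith)
    (x := t) ⟨ht.1, le_rfl⟩
  refine h.trans ?_
  have hl := log_nonneg' ht
  have e : Real.log (1 / (1 - t)) = - Real.log (1 - t) := by
    rw [one_div, Real.log_inv]
  rw [e] at hl ⊢
  have : blochNorm f = ‖f 0‖ + ρ := rfl
  rw [this]
  have := norm_nonneg (f 0)
  nlinarith

lemma exp_le_of_half {r : ℝ} (h : 1 / 2 ≤ r) (h1 : r ≤ 1) : Real.exp (-(2 * (1 - r))) ≤ r := by
  have h2 := Real.add_one_le_exp ((1 - r) / r)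
  have h3 : (1 - r) / r + 1 = r⁻¹ := by field_simp; ring
  rw [h3] at h2
  have h4 : (1 - r) / r ≤ 2 * (1 - r) := by
    rw [div_le_iff₀ (by linarith)]
    nlinarith
  have h5 : r⁻¹ ≤ Real.exp (2 * (1 - r)) := h2.trans (Real.exp_le_exp.2 h4)
  rw [Real.exp_neg]
  exact inv_le_of_inv_le₀ (by linarith) h5

lemma M2_bloch {f : ℂ → ℂ} {M : ℝ} 
    (hM : ∀ z ∈ ball (0:ℂ) 1, (1 - ‖z‖ ^ 2) * ‖deriv f z‖ ≤ M) {r : ℝ} (hr : r ∈ Ico (0:ℝ) 1) :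
    M2 (deriv f) r ^ 2 ≤ (M / (1 - r)) ^ 2 := by
  have hpi := Real.pi_pos
  have hr0 : 0 < 1 - r := by linarith [hr.2]
  have hM0 : 0 ≤ M := le_trans (by simp) (hM 0 (by simp))
  have hb : ∀ θ : ℝ, ‖deriv f (r * Complex.exp (θ * Complex.I))‖ ≤ M / (1 - r) := by
    intro θ
    have hn : ‖(r * Complex.exp (θ * Complex.I) : ℂ)‖ = r := by
      simp [abs_of_nonneg hr.1, Complex.norm_exp_ofReal_mul_I]
    have := hM (r * Complex.exp (θ * Complex.I)) (by rw [mem_ball_zero_iff, hn]; exact hr.2)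
    rw [hn] at this
    rw [le_div_iff₀ hr0]
    refine le_trans ?_ this
    rw [mul_comm]
    gcongr
    have := hr.1; nlinarith
  have h1 : ‖∫ θ in (0:ℝ)..(2 * Real.pi), ‖deriv f (r * Complex.exp (θ * Complex.I))‖ ^ 2‖
      ≤ (M / (1 - r)) ^ 2 * |2 * Real.pi - 0| := by
    apply intervalIntegral.norm_integral_le_of_norm_le_const
    intro θ _
    rw [Real.norm_of_nonneg (by positivity)]
    have := hb θ
    gcongr
  have hnn : 0 ≤ ∫ θ in (0:ℝ)..(2 * Real.pi), ‖deriv f (r * Complex.exp (θ * Complex.I))‖ ^ 2 :=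
    intervalIntegral.integral_nonneg (by positivity) (fun _ _ => by positivity)
  rw [Real.norm_of_nonneg hnn, sub_zero, abs_of_pos (by positivity)] at h1
  rw [M2, Real.sq_sqrt (by positivity), inv_mul_le_iff₀ (by positivity)]
  linarith

lemma bloch_coeff {f : ℂ → ℂ} (hf : MemBloch f) :
    Summable fun n : ℕ => ‖tc f (n + 1)‖ / ((n:ℝ) + 1) := by
  obtain ⟨hd, M, hM⟩ := hf
  set q : ℝ := (Real.sqrt 2)⁻¹ with hq
  have hs2 : 1 < Real.sqrt 2 := by
    rw [Real.lt_sqrt (by norm_num)]; norm_num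
  have hq0 : 0 < q := by positivity
  have hq1 : q < 1 := inv_lt_one_of_one_lt₀ hs2
  have hq2 : q ^ 2 = 1 / 2 := by rw [hq, inv_pow, Real.sq_sqrt (by norm_num)]; norm_num
  let r : ℕ → ℝ := fun j => 1 - (1 / 2) ^ (j + 1)
  have hp : ∀ j : ℕ, 0 < (1 / 2 : ℝ) ^ (j + 1) ∧ (1 / 2 : ℝ) ^ (j + 1) ≤ 1 / 2 := fun j =>
    ⟨by positivity, by
      rw [pow_succ]
      have : (1 / 2 : ℝ) ^ j ≤ 1 := pow_le_one₀ (by norm_num) (by norm_num)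
      linarith⟩
  have hr : ∀ j, r j ∈ Ico (0:ℝ) 1 := fun j =>
    ⟨by simp only [r]; linarith [(hp j).2], by simp only [r]; linarith [(hp j).1]⟩
  let T : ℕ × ℕ → ℝ := fun p => q ^ p.1 * (1 / 4) ^ p.1 *
    (((p.2:ℝ) + 1) ^ 2 * ‖tc f (p.2+1)‖ ^ 2 * r p.1 ^ (2 * p.2))
  have hT0 : 0 ≤ T := fun p => by
    have := (hr p.1).1
    simp only [T, Pi.zero_apply]; positivity
  have hT : Summable T := by
    rw [summable_prod_of_nonneg hT0]
    have hrow : ∀ j, HasSum (fun n => T (j, n)) (q ^ j * (1 / 4) ^ j * M2 (deriv f) (r j) ^ 2) :=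
      fun j => (M2_hasSum hd (hr j)).mul_left _
    refine ⟨fun j => (hrow j).summable, ?_⟩
    simp_rw [(hrow _).tsum_eq]
    refine Summable.of_nonneg_of_le (fun j => by positivity) (fun j => ?_)
      ((summable_geometric_of_lt_one hq0.le hq1).mul_left (4 * M ^ 2))
    have h1 := M2_bloch hM (hr j)
    have h2 : (M / (1 - r j)) ^ 2 = 4 ^ (j + 1) * M ^ 2 := by
      simp only [r, _root_.sub_sub_cancel]
      rw [one_div, inv_pow, div_inv_eq_mul, mul_pow, ← pow_mul, mul_comm (j+1) 2, pow_mul]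
      norm_num
      ring
    rw [h2] at h1
    calc q ^ j * (1 / 4) ^ j * M2 (deriv f) (r j) ^ 2
        ≤ q ^ j * (1 / 4) ^ j * (4 ^ (j + 1) * M ^ 2) := by gcongr
      _ = 4 * M ^ 2 * q ^ j * ((1 / 4) ^ j * 4 ^ j) := by ring
      _ = 4 * M ^ 2 * q ^ j := by rw [← mul_pow]; norm_num
  have hinj : Function.Injective (fun n : ℕ => ((Nat.log 2 (n + 1), n) : ℕ × ℕ)) :=
    fun a b h => (Prod.ext_iff.1 h).2
  have hS := (hT.comp_injective hinj).mul_left (Real.exp 4)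
  have hz : Summable fun n : ℕ => ((n:ℝ) + 1) ^ (-(3/2) : ℝ) := by
    have := (Real.summable_nat_rpow (p := (-(3/2) : ℝ))).2 (by norm_num)
    have := (summable_nat_add_iff 1).2 this
    simpa using this
  refine Summable.of_nonneg_of_le (fun n => by positivity) (fun n => ?_) (hS.add hz)
  set j := Nat.log 2 (n + 1) with hj
  set a := ‖tc f (n+1)‖ with ha
  have ha0 : 0 ≤ a := norm_nonneg _
  set x : ℝ := (n:ℝ) + 1 with hx
  have hx1 : 1 ≤ x := by rw [hx]; linarith [(Nat.cast_nonneg n : (0:ℝ) ≤ n)]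
  have hx0 : 0 < x := by linarith
  have hlow : (2:ℝ) ^ j ≤ x := by
    have := Nat.pow_log_le_self 2 (Nat.succ_ne_zero n)
    rw [hx]; exact_mod_cast this
  have hup : x < (2:ℝ) ^ (j + 1) := by
    have := Nat.lt_pow_succ_log_self (b := 2) (by norm_num) (n + 1)
    rw [hx]; exact_mod_cast this
  -- q^j ≥ x^(-1/2)
  have hqj : x ^ (-(1/2) : ℝ) ≤ q ^ j := by
    refine le_of_sq ?_ (by positivity)
    rw [← pow_mul, mul_comm j 2, pow_mul, hq2, ← Real.rpow_natCast, ← Real.rpow_mul hx0.le]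
    norm_num
    rw [Real.rpow_neg_one]
    rw [one_div, inv_pow]
    exact inv_anti₀ (by positivity) hlow
  have hrn : Real.exp (-4) ≤ r j ^ (2 * n) := by
    have h1 := exp_le_of_half (r := r j) (by simp only [r]; linarith [(hp j).2]) (hr j).2.le
    have h2 : Real.exp (-4) ≤ (Real.exp (-(2 * (1 - r j)))) ^ (2 * n) := by
      rw [← Real.exp_nat_mul, Real.exp_le_exp]
      simp only [r, _root_.sub_sub_cancel]
      push_cast
      have : (n:ℝ) * (1 / 2) ^ (j + 1) ≤ 1 := by
        rw [one_div, inv_pow, mul_inv_le_iff₀ (by positivity)]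
        linarith
      nlinarith
    exact h2.trans (pow_le_pow_left₀ (Real.exp_pos _).le h1 _)
  have h4 : 1 ≤ (1 / 4 : ℝ) ^ j * x ^ 2 := by
    have h5 : (4:ℝ) ^ j ≤ x ^ 2 := by
      calc (4:ℝ) ^ j = ((2:ℝ) ^ j) ^ 2 := by rw [← pow_mul, mul_comm, pow_mul]; norm_num
        _ ≤ x ^ 2 := by gcongr
    rw [one_div, inv_pow, inv_mul_eq_div, one_le_div (by positivity)]
    exact h5
  have hmain : x ^ (-(1/2) : ℝ) * a ^ 2 ≤ Real.exp 4 * T (j, n) := by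
    have e : Real.exp 4 * T (j, n) =
        q ^ j * a ^ 2 * ((1 / 4 : ℝ) ^ j * x ^ 2) * (Real.exp 4 * r j ^ (2 * n)) := by
      simp only [T]; rw [← hx, ← ha]; ring
    have h6 : 1 ≤ Real.exp 4 * r j ^ (2 * n) := by
      calc 1 = Real.exp 4 * Real.exp (-4) := by rw [← Real.exp_add]; simp
        _ ≤ _ := by gcongr
    rw [e]
    calc x ^ (-(1/2) : ℝ) * a ^ 2 ≤ q ^ j * a ^ 2 * 1 * 1 := by
          rw [mul_one, mul_one]; gcongr
      _ ≤ _ := by gcongr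
  have hfin : a / x ≤ x ^ (-(1/2) : ℝ) * a ^ 2 + x ^ (-(3/2) : ℝ) := by
    set y : ℝ := x ^ (-(1/2) : ℝ) with hy
    have hy0 : 0 < y := by positivity
    have e1 : x ^ (-(3/2) : ℝ) = y ^ 3 := by
      rw [hy, ← Real.rpow_natCast, ← Real.rpow_mul hx0.le]; norm_num
    have e2 : x⁻¹ = y ^ 2 := by
      rw [hy, ← Real.rpow_natCast, ← Real.rpow_mul hx0.le]; norm_num [Real.rpow_neg_one]
    rw [e1, div_eq_mul_inv, e2]
    have : a * y ≤ a ^ 2 + y ^ 2 := by nlinarith [sq_nonneg (a - y)]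
    nlinarith
  exact hfin.trans (add_le_add hmain le_rfl)

/-- the test function -/
def f0 : ℂ → ℂ := fun z => - Complex.log (1 - z)

lemma f0_hasDerivAt {z : ℂ} (hz : z ∈ ball (0:ℂ) 1) : HasDerivAt f0 ((1 - z)⁻¹) z := by
  have hz' : ‖z‖ < 1 := by simpa using hz
  have h1 : HasDerivAt (fun z : ℂ => 1 - z) (-1) z := by
    simpa using (hasDerivAt_id z).const_sub 1
  have h2 := (h1.clog (Complex.mem_slitPlane_of_norm_lt_one (z := -z) (by simpa using hz'))).neg
  convert! h2 using 1
  ring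

lemma f0_bloch : MemBloch f0 := by
  refine ⟨fun z hz => (f0_hasDerivAt hz).differentiableAt.differentiableWithinAt, 2, fun z hz => ?_⟩
  have hz' : ‖z‖ < 1 := by simpa using hz
  rw [(f0_hasDerivAt hz).deriv, norm_inv]
  have h1 : 1 - ‖z‖ ≤ ‖1 - z‖ := by
    have := norm_sub_norm_le (1:ℂ) z
    simpa using this
  rw [← div_eq_mul_inv, div_le_iff₀ (by linarith)]
  have := norm_nonneg z
  nlinarith

lemma f0_ofReal {t : ℝ} (ht : t ∈ Ico (0:ℝ) 1) : f0 t = ((Real.log (1 / (1 - t)) : ℝ) : ℂ) := by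
  rw [f0, one_div, Real.log_inv]
  push_cast
  rw [Complex.ofReal_log (by linarith [ht.2])]
  simp

lemma f0_tc (n : ℕ) : tc f0 n = (((n:ℝ)⁻¹ : ℝ) : ℂ) := by
  refine (of_hasSum (b := fun n => (((n:ℝ)⁻¹ : ℝ) : ℂ)) fun z hz => ?_).2 n
  have := Complex.hasSum_taylorSeries_neg_log (z := z) (by simpa using hz)
  have e : (fun n : ℕ => (((n:ℝ)⁻¹ : ℝ) : ℂ) * z ^ n) = fun n : ℕ => z ^ n / (n:ℂ) := by
    funext n
    push_cast
    ring
  rw [e]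
  exact this

lemma carleson_of_logmoment (μ : Measure ℝ) [IsFiniteMeasure μ] (h : LogMomentBigO μ) :
    IsLogCarleson μ 1 1 := by
  obtain ⟨C, hC, h⟩ := h
  set m := (μ univ).toReal with hm
  have hm0 : 0 ≤ m := ENNReal.toReal_nonneg
  have he := Real.exp_pos 2
  refine ⟨4 * Real.exp 2 * C + 4 * m, by positivity, fun t ht => ?_⟩
  rw [Real.rpow_one, Real.rpow_one]
  have h1t : 0 < 1 - t := by linarith [ht.2]
  have hμm : (μ (Ico t 1)).toReal ≤ m :=
    ENNReal.toReal_mono (measure_ne_top _ _) (measure_mono (subset_univ _))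
  have hμ0 : 0 ≤ (μ (Ico t 1)).toReal := ENNReal.toReal_nonneg
  rcases lt_or_ge t (1/2) with hlt | hge
  · have hl : Real.log (2 / (1 - t)) ≤ 2 := by
      have h2 : 2 / (1 - t) ≤ 4 := by rw [div_le_iff₀ h1t]; linarith
      have h3 : Real.log (2 / (1 - t)) ≤ Real.log 4 := Real.log_le_log (by positivity) h2
      have h4 : Real.log 4 = 2 * Real.log 2 := by
        rw [show (4:ℝ) = 2 ^ 2 by norm_num, Real.log_pow]; norm_num
      have := Real.log_two_lt_d9
      linarith
    calc (μ (Ico t 1)).toReal * Real.log (2 / (1 - t)) ≤ m * 2 := by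
          refine mul_le_mul hμm hl ?_ hm0
          apply Real.log_nonneg
          rw [le_div_iff₀ h1t]; linarith [ht.1]
      _ ≤ (4 * Real.exp 2 * C + 4 * m) * (1 - t) := by
          have : 0 ≤ Real.exp 2 * C := by positivity
          nlinarith
  · set n := ⌊1 / (1 - t)⌋₊ with hn
    have h2 : 2 ≤ 1 / (1 - t) := by rw [le_div_iff₀ h1t]; linarith
    have hn1 : 1 ≤ n := by
      rw [hn, Nat.one_le_floor_iff]; linarith
    have hnle : (n:ℝ) ≤ 1 / (1 - t) := Nat.floor_le (by positivity)
    have hnlt : 1 / (1 - t) < n + 1 := Nat.lt_floor_add_one _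
    have hn1' : (1:ℝ) ≤ n := by exact_mod_cast hn1
    set L := Real.log (1 / (1 - t)) with hL
    have hL0 : 0 ≤ L := log_nonneg' ht
    have hlow : ∀ s ∈ Ico t 1, Real.exp (-2) * L ≤ s ^ n * Real.log (1 / (1 - s)) := by
      intro s hs
      have hs1 : 0 < 1 - s := by linarith [hs.2]
      have h3 : Real.exp (-2) ≤ s ^ n := by
        have h4 := exp_le_of_half hge ht.2.le
        calc Real.exp (-2) ≤ (Real.exp (-(2 * (1 - t)))) ^ n := by
              rw [← Real.exp_nat_mul, Real.exp_le_exp]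
              rw [le_div_iff₀ h1t] at hnle
              nlinarith
          _ ≤ t ^ n := pow_le_pow_left₀ (Real.exp_pos _).le h4 _
          _ ≤ s ^ n := pow_le_pow_left₀ ht.1 hs.1 _
      have h5 : L ≤ Real.log (1 / (1 - s)) := by
        apply Real.log_le_log (by positivity)
        exact one_div_le_one_div_of_le hs1 (by linarith [hs.1])
      exact mul_le_mul h3 h5 hL0 ((Real.exp_pos _).le.trans h3)
    have h6 : ENNReal.ofReal (Real.exp (-2) * L) * μ (Ico t 1) ≤ ENNReal.ofReal (C / n) := by
      refine le_trans ?_ (h n hn1)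
      rw [← setLIntegral_const]
      refine le_trans (setLIntegral_mono' measurableSet_Ico fun s hs => ?_)
        (lintegral_mono_set (Ico_subset_Ico_left ht.1))
      exact ENNReal.ofReal_le_ofReal (hlow s hs)
    have h7 := ENNReal.toReal_mono ENNReal.ofReal_ne_top h6
    rw [ENNReal.toReal_mul, ENNReal.toReal_ofReal (by positivity),
      ENNReal.toReal_ofReal (by positivity)] at h7
    have h8 : Real.log (2 / (1 - t)) ≤ 2 * L := by
      have : Real.log (2 / (1 - t)) = Real.log 2 + L := by
        rw [hL, ← Real.log_mul (by norm_num) (by positivity)]; congr 1; ring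
      have : Real.log 2 ≤ L := Real.log_le_log (by norm_num) h2
      linarith
    have h9 : C / n ≤ 2 * C * (1 - t) := by
      rw [div_le_iff₀ (by positivity)]
      rw [div_lt_iff₀ h1t] at hnlt
      have : 1 ≤ 2 * ((1 - t) * n) := by nlinarith
      nlinarith
    have h10 : (μ (Ico t 1)).toReal * L ≤ Real.exp 2 * (2 * C * (1 - t)) := by
      have e : (μ (Ico t 1)).toReal * L = Real.exp 2 * (Real.exp (-2) * L * (μ (Ico t 1)).toReal) := by
        have : Real.exp 2 * Real.exp (-2) = 1 := by rw [← Real.exp_add]; simp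
        linear_combination (-(μ (Ico t 1)).toReal * L) * this
      rw [e]
      have := h7.trans h9
      gcongr
    calc (μ (Ico t 1)).toReal * Real.log (2 / (1 - t)) ≤ (μ (Ico t 1)).toReal * (2 * L) := by gcongr
      _ ≤ (4 * Real.exp 2 * C + 4 * m) * (1 - t) := by
          have : 0 ≤ m * (1 - t) := by positivity
          nlinarith

lemma logmoment_of_carleson (μ : Measure ℝ) [IsFiniteMeasure μ] (h : IsLogCarleson μ 1 1) :
    LogMomentBigO μ := by
  obtain ⟨C, hC, h⟩ := h
  refine ⟨3 * C, by positivity, fun n hn => ?_⟩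
  obtain ⟨k, rfl⟩ : ∃ k, n = k + 1 := ⟨n - 1, by omega⟩
  let u : ℝ → ℝ := fun x => 1 - Real.exp (-x)
  have hu : ∀ x, HasDerivAt u (Real.exp (-x)) x := by
    intro x
    have := ((hasDerivAt_neg x).exp).const_sub 1
    simpa [u] using this
  have hu0 : ∀ x, 0 ≤ x → 0 ≤ u x := fun x hx => by
    simp only [u]; have := Real.exp_le_one_iff.2 (by linarith : -x ≤ 0); linarith
  have hucont : Continuous u := by fun_prop
  let g : ℝ → ℝ := fun x => (k + 1) * u x ^ k * Real.exp (-x) * x + u x ^ (k + 1)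
  have hgcont : Continuous g := by fun_prop
  have hG : ∀ x, HasDerivAt (fun x => u x ^ (k + 1) * x) (g x) x := by
    intro x
    have := ((hu x).fun_pow (k + 1)).fun_mul (hasDerivAt_id x)
    convert! this using 1
    simp [g]
  have hint : ∀ y, ∫ x in (0:ℝ)..y, g x = u y ^ (k + 1) * y := by
    intro y
    rw [intervalIntegral.integral_eq_sub_of_hasDerivAt (fun x _ => hG x)
      (hgcont.intervalIntegrable _ _)]
    simp
  have hlay := lintegral_comp_eq_lintegral_meas_le_mul (μ.restrict (Ico 0 1))
    (f := fun t => Real.log (1 / (1 - t))) (g := g)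
    (by
      filter_upwards [ae_restrict_mem measurableSet_Ico] with t ht
      exact log_nonneg' ht)
    (by
      apply Measurable.aemeasurable
      fun_prop)
    (fun t _ => hgcont.intervalIntegrable _ _)
    (by
      filter_upwards [ae_restrict_mem measurableSet_Ioi] with x hx
      have := hu0 x (le_of_lt hx)
      have : 0 < x := hx
      simp only [g]; positivity)
  have hleft : ∫⁻ t in Ico (0:ℝ) 1, ENNReal.ofReal (t ^ (k+1) * Real.log (1 / (1 - t))) ∂μ =
      ∫⁻ t in Ico (0:ℝ) 1, ENNReal.ofReal (∫ x in (0:ℝ)..(Real.log (1 / (1 - t))), g x) ∂μ := by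
    refine setLIntegral_congr_fun measurableSet_Ico fun t ht => ?_
    have h1t : 0 < 1 - t := by linarith [ht.2]
    simp only [hint, u]
    rw [one_div, Real.log_inv, neg_neg, Real.exp_log h1t]
    congr 3
    ring
  rw [hleft, hlay]
  let H : ℝ → ℝ := fun x => C * ((k + 1) * u x ^ k * Real.exp (-x) * (1 - u x)
    + 2 * u x ^ (k + 1) * Real.exp (-x))
  let A : ℝ → ℝ := fun x => C * (u x ^ (k + 1) - (k + 1) / (k + 2) * u x ^ (k + 2)
    + 2 / (k + 2) * u x ^ (k + 2))
  have hk2 : ((k:ℝ) + 2) ≠ 0 := by positivity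
  have hA : ∀ x, HasDerivAt A (H x) x := by
    intro x
    have h1 := (hu x).fun_pow (k + 1)
    have h2 := (hu x).fun_pow (k + 2)
    have := ((h1.fun_sub (h2.const_mul ((k + 1) / (k + 2) : ℝ))).fun_add
      (h2.const_mul (2 / (k + 2) : ℝ))).const_mul C
    convert! this using 1
    simp only [H, Nat.add_sub_cancel]
    rw [show k + 2 - 1 = k + 1 by omega]
    push_cast
    field_simp
    ring
  have hH0 : ∀ x ∈ Ioi (0:ℝ), 0 ≤ H x := by
    intro x hx
    have h1 := hu0 x (le_of_lt hx)
    have h2 : 0 ≤ 1 - u x := by simp only [u]; linarith [Real.exp_pos (-x)]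
    simp only [H]; positivity
  have hlim : Filter.Tendsto A Filter.atTop (nhds (3 * C / (k + 2))) := by
    have h1 : Filter.Tendsto u Filter.atTop (nhds 1) := by
      have := (Real.tendsto_exp_neg_atTop_nhds_zero).const_sub 1
      simpa [u] using this
    have := (((h1.pow (k+1)).sub ((h1.pow (k+2)).const_mul ((k + 1) / (k + 2) : ℝ))).add
      ((h1.pow (k+2)).const_mul (2 / (k + 2) : ℝ))).const_mul C
    convert this using 2
    simp only [one_pow]
    field_simp
    ring
  have hHint : IntegrableOn H (Ioi 0) := integrableOn_Ioi_deriv_of_nonneg' (fun x _ => hA x) hH0 hlim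
  have hHval : ∫ x in Ioi (0:ℝ), H x = 3 * C / (k + 2) := by
    rw [integral_Ioi_of_hasDerivAt_of_nonneg' (fun x _ => hA x) hH0 hlim]
    simp [A, u]
  have hle : ∫⁻ x in Ioi (0:ℝ), (μ.restrict (Ico 0 1)) {a | x ≤ Real.log (1 / (1 - a))} *
      ENNReal.ofReal (g x) ≤ ∫⁻ x in Ioi (0:ℝ), ENNReal.ofReal (H x) := by
    refine setLIntegral_mono' measurableSet_Ioi fun x hx => ?_
    have hx0 : 0 < x := hx
    have hux := hu0 x hx0.le
    have hu1 : u x < 1 := by simp only [u]; linarith [Real.exp_pos (-x)]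
    have hset : (μ.restrict (Ico 0 1)) {a | x ≤ Real.log (1 / (1 - a))} ≤ μ (Ico (u x) 1) := by
      rw [Measure.restrict_apply' measurableSet_Ico]
      apply measure_mono
      rintro a ⟨ha, ha0, ha1⟩
      refine ⟨?_, ha1⟩
      simp only [Set.mem_ofPred_eq, one_div, Real.log_inv] at ha
      have : Real.exp (Real.log (1 - a)) ≤ Real.exp (-x) := Real.exp_le_exp.2 (by linarith)
      rw [Real.exp_log (by linarith)] at this
      simp only [u]; linarith
    have hl2 := Real.log_two_gt_d9
    have h1 := h (u x) ⟨hux, hu1⟩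
    rw [Real.rpow_one, Real.rpow_one] at h1
    have e1 : 1 - u x = Real.exp (-x) := by simp only [u]; ring
    have e2 : Real.log (2 / (1 - u x)) = Real.log 2 + x := by
      rw [e1, Real.log_div (by norm_num) (Real.exp_pos _).ne', Real.log_exp]; ring
    rw [e2, e1] at h1
    have hgx : 0 ≤ g x := by simp only [g]; positivity
    have hμx : 0 ≤ (μ (Ico (u x) 1)).toReal := ENNReal.toReal_nonneg
    have hfin : (μ (Ico (u x) 1)).toReal * g x ≤ H x := by
      have h2 : (μ (Ico (u x) 1)).toReal * x ≤ C * Real.exp (-x) := by nlinarith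
      have h3 : (μ (Ico (u x) 1)).toReal ≤ 2 * C * Real.exp (-x) := by nlinarith
      have hE := Real.exp_pos (-x)
      have h4 : (k + 1) * u x ^ k * Real.exp (-x) * ((μ (Ico (u x) 1)).toReal * x) ≤
        (k + 1) * u x ^ k * Real.exp (-x) * (C * Real.exp (-x)) := by gcongr
      have h5 : u x ^ (k + 1) * (μ (Ico (u x) 1)).toReal ≤ u x ^ (k + 1) * (2 * C * Real.exp (-x)) := by
        gcongr
      simp only [g, H]
      rw [e1]
      linarith
    calc _ ≤ μ (Ico (u x) 1) * ENNReal.ofReal (g x) := by gcongr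
      _ = ENNReal.ofReal ((μ (Ico (u x) 1)).toReal * g x) := by
          rw [ENNReal.ofReal_mul hμx, ENNReal.ofReal_toReal (measure_ne_top _ _)]
      _ ≤ _ := ENNReal.ofReal_le_ofReal hfin
  refine hle.trans ?_
  rw [← ofReal_integral_eq_lintegral_ofReal hHint
    (by filter_upwards [ae_restrict_mem measurableSet_Ioi] with x hx using hH0 x hx), hHval]
  apply ENNReal.ofReal_le_ofReal
  push_cast
  gcongr
  linarith

lemma weight_of_logmoment (μ : Measure ℝ) [IsFiniteMeasure μ] (h : LogMomentBigO μ) :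
    IntegrableOn (fun t => 1 + Real.log (1 / (1 - t))) (Ico 0 1) μ ∧
    ∃ K > 0, ∀ n : ℕ, ∫ t in Ico (0:ℝ) 1, t ^ n * (1 + Real.log (1 / (1 - t))) ∂μ ≤ K / (n + 1) := by
  obtain ⟨C, hC, h⟩ := h
  have hmeas : ∀ n : ℕ, Measurable fun t : ℝ => t ^ n * Real.log (1 / (1 - t)) := by
    intro n; fun_prop
  have hnn : ∀ n : ℕ, 0 ≤ᵐ[μ.restrict (Ico 0 1)] fun t : ℝ => t ^ n * Real.log (1 / (1 - t)) := by
    intro n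
    filter_upwards [ae_restrict_mem measurableSet_Ico] with t ht
    exact mul_nonneg (pow_nonneg ht.1 _) (log_nonneg' ht)
  have hi : ∀ n : ℕ, 1 ≤ n → IntegrableOn (fun t : ℝ => t ^ n * Real.log (1 / (1 - t))) (Ico 0 1) μ := by
    intro n hn
    refine ⟨(hmeas n).aestronglyMeasurable, ?_⟩
    rw [hasFiniteIntegral_iff_ofReal (hnn n)]
    exact (h n hn).trans_lt ENNReal.ofReal_lt_top
  have hb : ∀ n : ℕ, 1 ≤ n → ∫ t in Ico (0:ℝ) 1, t ^ n * Real.log (1 / (1 - t)) ∂μ ≤ C / n := by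
    intro n hn
    have h1 := h n hn
    rw [← ofReal_integral_eq_lintegral_ofReal (hi n hn) (hnn n)] at h1
    exact (ENNReal.ofReal_le_ofReal_iff (by positivity)).1 h1
  -- pointwise bounds
  have hl2 := Real.log_two_gt_d9
  have hl2' := Real.log_two_lt_d9
  have hbig : ∀ t : ℝ, 1 / 2 ≤ t → t < 1 → 1 + Real.log (1 / (1 - t)) ≤ 3 * Real.log (1 / (1 - t)) := by
    intro t ht ht1
    have : Real.log 2 ≤ Real.log (1 / (1 - t)) := by
      apply Real.log_le_log (by norm_num)
      rw [le_div_iff₀ (by linarith)]; linarith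
    linarith
  have hsmall : ∀ t : ℝ, t < 1 / 2 → 0 ≤ t → 1 + Real.log (1 / (1 - t)) ≤ 2 := by
    intro t ht ht0
    have : Real.log (1 / (1 - t)) ≤ Real.log 2 := by
      apply Real.log_le_log (one_div_pos.2 (by linarith))
      rw [div_le_iff₀ (by linarith)]; linarith
    linarith
  have hpt : ∀ n : ℕ, ∀ t ∈ Ico (0:ℝ) 1, t ^ n * (1 + Real.log (1 / (1 - t))) ≤
      3 * (t ^ n * Real.log (1 / (1 - t))) + 2 * (1 / 2) ^ n := by
    intro n t ht
    have h0 := log_nonneg' ht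
    have htn : 0 ≤ t ^ n := pow_nonneg ht.1 n
    rcases lt_or_ge t (1/2) with hlt | hge
    · have h1 := hsmall t hlt ht.1
      have h2 : t ^ n ≤ (1/2) ^ n := pow_le_pow_left₀ ht.1 hlt.le n
      have : t ^ n * (1 + Real.log (1 / (1 - t))) ≤ (1/2) ^ n * 2 := by gcongr
      have : 0 ≤ t ^ n * Real.log (1 / (1 - t)) := by positivity
      linarith
    · have h1 := mul_le_mul_of_nonneg_left (hbig t hge ht.2) htn
      have : (0:ℝ) ≤ 2 * (1 / 2) ^ n := by positivity
      linarith
  have hpt0 : ∀ t ∈ Ico (0:ℝ) 1, (1 + Real.log (1 / (1 - t))) ≤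
      6 * (t ^ 1 * Real.log (1 / (1 - t))) + 2 := by
    intro t ht
    have h0 := log_nonneg' ht
    rw [pow_one]
    rcases lt_or_ge t (1/2) with hlt | hge
    · have h1 := hsmall t hlt ht.1
      have : 0 ≤ t * Real.log (1 / (1 - t)) := mul_nonneg ht.1 h0
      linarith
    · have h1 := hbig t hge ht.2
      nlinarith
  have hdom : IntegrableOn (fun t : ℝ => 6 * (t ^ 1 * Real.log (1 / (1 - t))) + 2) (Ico 0 1) μ :=
    ((hi 1 le_rfl).const_mul 6).add (integrable_const _)
  have hw : IntegrableOn (fun t => 1 + Real.log (1 / (1 - t))) (Ico 0 1) μ := by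
    refine Integrable.mono' hdom ?_ ?_
    · apply Measurable.aestronglyMeasurable; fun_prop
    · filter_upwards [ae_restrict_mem measurableSet_Ico] with t ht
      rw [Real.norm_of_nonneg (by linarith [log_nonneg' ht])]
      exact hpt0 t ht
  refine ⟨hw, ?_⟩
  set m := μ.real (Ico 0 1) with hm
  have hm0 : 0 ≤ m := measureReal_nonneg
  refine ⟨6 * C + 4 * m, by positivity, fun n => ?_⟩
  rcases Nat.eq_zero_or_pos n with rfl | hn
  · simp only [pow_zero, one_mul, Nat.cast_zero, zero_add, div_one]
    calc ∫ t in Ico (0:ℝ) 1, (1 + Real.log (1 / (1 - t))) ∂μ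
        ≤ ∫ t in Ico (0:ℝ) 1, (6 * (t ^ 1 * Real.log (1 / (1 - t))) + 2) ∂μ :=
          setIntegral_mono_on hw hdom
            measurableSet_Ico hpt0
      _ = 6 * (∫ t in Ico (0:ℝ) 1, t ^ 1 * Real.log (1 / (1 - t)) ∂μ) + m * 2 := by
          rw [integral_add ((hi 1 le_rfl).const_mul 6) (integrable_const _), integral_const_mul]
          simp [hm]
      _ ≤ _ := by
          have := hb 1 le_rfl
          simp only [Nat.cast_one, div_one] at this
          linarith
  · have hn1 : (1:ℝ) ≤ n := by exact_mod_cast hn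
    have hwn : IntegrableOn (fun t => t ^ n * (1 + Real.log (1 / (1 - t)))) (Ico 0 1) μ := by
      refine Integrable.mono' hw ?_ ?_
      · apply Measurable.aestronglyMeasurable; fun_prop
      · filter_upwards [ae_restrict_mem measurableSet_Ico] with t ht
        have h0 := log_nonneg' ht
        have htn : 0 ≤ t ^ n := pow_nonneg ht.1 n
        rw [Real.norm_of_nonneg (by positivity)]
        have : t ^ n ≤ 1 := pow_le_one₀ ht.1 ht.2.le
        nlinarith
    have h2n : (1 / 2 : ℝ) ^ n ≤ 1 / (n + 1) := by
      rw [one_div, inv_pow, ← one_div]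
      apply one_div_le_one_div_of_le (by positivity)
      have : n + 1 ≤ 2 ^ n := Nat.lt_two_pow_self
      exact_mod_cast this
    calc ∫ t in Ico (0:ℝ) 1, t ^ n * (1 + Real.log (1 / (1 - t))) ∂μ
        ≤ ∫ t in Ico (0:ℝ) 1, (3 * (t ^ n * Real.log (1 / (1 - t))) + 2 * (1 / 2) ^ n) ∂μ :=
          setIntegral_mono_on hwn (((hi n hn).const_mul 3).add (integrable_const _))
            measurableSet_Ico (hpt n)
      _ = 3 * (∫ t in Ico (0:ℝ) 1, t ^ n * Real.log (1 / (1 - t)) ∂μ) + m * (2 * (1 / 2) ^ n) := by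
          rw [integral_add ((hi n hn).const_mul 3) (integrable_const _), integral_const_mul]
          simp [hm]
      _ ≤ 3 * (C / n) + m * (2 * (1 / (n + 1))) := by
          have := hb n hn
          gcongr
      _ ≤ 3 * (2 * C / (n + 1)) + m * (2 * (1 / (n + 1))) := by
          have : C / n ≤ 2 * C / (n + 1) := by
            rw [div_le_div_iff₀ (by positivity) (by positivity)]
            nlinarith
          gcongr
      _ ≤ _ := by
          rw [le_div_iff₀ (by positivity)]
          field_simp
          nlinarith

lemma imu_hasSum (μ : Measure ℝ) [IsFiniteMeasure μ] {φ : ℝ → ℂ}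
    (hφ : IntegrableOn φ (Ico 0 1) μ) {z : ℂ} (hz : z ∈ ball (0:ℂ) 1) :
    IntegrableOn (fun t : ℝ => φ t / (1 - t * z)) (Ico 0 1) μ ∧
    HasSum (fun n : ℕ => (∫ t in Ico (0:ℝ) 1, (t:ℂ) ^ n * φ t ∂μ) * z ^ n)
      (∫ t in Ico (0:ℝ) 1, φ t / (1 - t * z) ∂μ) := by
  have hz' : ‖z‖ < 1 := by simpa using hz
  have hnorm : ∀ t ∈ Ico (0:ℝ) 1, ‖(t:ℂ) * z‖ ≤ ‖z‖ := by
    intro t ht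
    rw [norm_mul, Complex.norm_real, Real.norm_of_nonneg ht.1]
    have := norm_nonneg z
    nlinarith [ht.2]
  have hden : ∀ t ∈ Ico (0:ℝ) 1, 1 - ‖z‖ ≤ ‖1 - (t:ℂ) * z‖ := by
    intro t ht
    have h1 := norm_sub_norm_le (1:ℂ) (t * z)
    rw [norm_one] at h1
    linarith [hnorm t ht]
  constructor
  · have hdom : IntegrableOn (fun t => ‖φ t‖ * (1 - ‖z‖)⁻¹) (Ico 0 1) μ := hφ.norm.mul_const _
    refine Integrable.mono' hdom ?_ ?_
    · simp_rw [div_eq_mul_inv]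
      refine hφ.1.mul ?_
      apply Measurable.aestronglyMeasurable
      fun_prop
    · filter_upwards [ae_restrict_mem measurableSet_Ico] with t ht
      rw [norm_div, div_eq_mul_inv]
      have h1 := hden t ht
      have h2 : 0 < 1 - ‖z‖ := by linarith
      gcongr
  · have hFi : ∀ n : ℕ, IntegrableOn (fun t : ℝ => (t:ℂ) ^ n * φ t * z ^ n) (Ico 0 1) μ ∧
        ∫ t in Ico (0:ℝ) 1, ‖(t:ℂ) ^ n * φ t * z ^ n‖ ∂μ ≤ (∫ t in Ico (0:ℝ) 1, ‖φ t‖ ∂μ) * ‖z‖ ^ n := by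
      intro n
      have hdom : IntegrableOn (fun t => ‖φ t‖ * ‖z‖ ^ n) (Ico 0 1) μ := hφ.norm.mul_const _
      have hle : ∀ t ∈ Ico (0:ℝ) 1, ‖(t:ℂ) ^ n * φ t * z ^ n‖ ≤ ‖φ t‖ * ‖z‖ ^ n := by
        intro t ht
        rw [norm_mul, norm_mul, norm_pow, norm_pow, Complex.norm_real, Real.norm_of_nonneg ht.1]
        gcongr
        have : t ^ n ≤ 1 := pow_le_one₀ ht.1 ht.2.le
        have := norm_nonneg (φ t)
        nlinarith
      have hint : IntegrableOn (fun t : ℝ => (t:ℂ) ^ n * φ t * z ^ n) (Ico 0 1) μ := by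
        refine Integrable.mono' hdom ?_ ?_
        · refine AEStronglyMeasurable.mul_const ?_ _
          refine AEStronglyMeasurable.mul ?_ hφ.1
          apply Continuous.aestronglyMeasurable; fun_prop
        · filter_upwards [ae_restrict_mem measurableSet_Ico] with t ht
          exact hle t ht
      refine ⟨hint, ?_⟩
      rw [← integral_mul_const]
      exact setIntegral_mono_on hint.norm hdom measurableSet_Ico hle
    have hs := hasSum_integral_of_summable_integral_norm (μ := μ.restrict (Ico 0 1))
      (F := fun (n : ℕ) (t : ℝ) => (t:ℂ) ^ n * φ t * z ^ n) (fun n => (hFi n).1)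
      (Summable.of_nonneg_of_le (fun n => by positivity) (fun n => (hFi n).2)
        ((summable_geometric_of_lt_one (norm_nonneg z) hz').mul_left _))
    have e1 : (fun n : ℕ => (∫ t in Ico (0:ℝ) 1, (t:ℂ) ^ n * φ t ∂μ) * z ^ n) =
        fun n : ℕ => ∫ t in Ico (0:ℝ) 1, (t:ℂ) ^ n * φ t * z ^ n ∂μ := by
      funext n; rw [integral_mul_const]
    have e2 : ∫ t in Ico (0:ℝ) 1, φ t / (1 - t * z) ∂μ =
        ∫ t in Ico (0:ℝ) 1, ∑' n : ℕ, (t:ℂ) ^ n * φ t * z ^ n ∂μ := by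
      refine setIntegral_congr_fun measurableSet_Ico fun t ht => ?_
      have hg := (hasSum_geometric_of_norm_lt_one ((hnorm t ht).trans_lt hz')).mul_left (φ t)
      beta_reduce
      rw [div_eq_mul_inv, ← hg.tsum_eq]
      refine tsum_congr fun n => ?_
      rw [mul_pow]; ring
    rw [e1, e2]
    exact hs

lemma integrable_pow (μ : Measure ℝ) [IsFiniteMeasure μ] (n : ℕ) :
    IntegrableOn (fun t : ℝ => t ^ n) (Ico 0 1) μ := by
  refine Integrable.mono' (integrable_const (1:ℝ)) ?_ ?_
  · apply Continuous.aestronglyMeasurable; fun_prop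
  · filter_upwards [ae_restrict_mem measurableSet_Ico] with t ht
    rw [Real.norm_of_nonneg (pow_nonneg ht.1 _)]
    exact pow_le_one₀ ht.1 ht.2.le

lemma mom_nonneg (μ : Measure ℝ) (n : ℕ) : 0 ≤ mom μ n :=
  setIntegral_nonneg measurableSet_Ico fun t ht => pow_nonneg ht.1 _

lemma hmu_coeff (μ : Measure ℝ) [IsFiniteMeasure μ] {f : ℂ → ℂ}
    (hf : DifferentiableOn ℂ f (ball (0:ℂ) 1)) (n : ℕ)
    (hs : Summable fun k : ℕ => ‖(mom μ (n + k) : ℂ) * tc f k‖) :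
    IntegrableOn (fun t : ℝ => (t:ℂ) ^ n * f t) (Ico 0 1) μ ∧
    hmuCoeff μ f n = ∫ t in Ico (0:ℝ) 1, (t:ℂ) ^ n * f t ∂μ := by
  let F : ℕ → ℝ → ℂ := fun k t => ((t ^ (n + k) : ℝ) : ℂ) * tc f k
  have hFi : ∀ k, Integrable (F k) (μ.restrict (Ico 0 1)) := fun k =>
    ((integrable_pow μ (n + k)).ofReal).mul_const _
  have hFn : ∀ k, ∫ t in Ico (0:ℝ) 1, ‖F k t‖ ∂μ = ‖(mom μ (n + k) : ℂ) * tc f k‖ := by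
    intro k
    rw [norm_mul, Complex.norm_real, Real.norm_of_nonneg (mom_nonneg _ _), mom, ← integral_mul_const]
    refine setIntegral_congr_fun measurableSet_Ico fun t ht => ?_
    simp only [F]
    rw [norm_mul, Complex.norm_real, Real.norm_of_nonneg (pow_nonneg ht.1 _)]
  have hsum : ∀ t ∈ Ico (0:ℝ) 1, HasSum (fun k => F k t) ((t:ℂ) ^ n * f t) := by
    intro t ht
    have := (hasSum_tc hf (ofReal_mem_ball ht)).mul_left ((t:ℂ) ^ n)
    have e : (fun k => F k t) = fun k => (t:ℂ) ^ n * (tc f k * (t:ℂ) ^ k) := by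
      funext k; simp only [F]; push_cast; ring
    rw [e]; exact this
  have hcont : ContinuousOn (fun t : ℝ => (t:ℂ) ^ n * f t) (Ico 0 1) := by
    refine ContinuousOn.mul (by fun_prop) ?_
    exact hf.continuousOn.comp (by fun_prop) (fun t ht => ofReal_mem_ball ht)
  constructor
  · refine ⟨hcont.aestronglyMeasurable measurableSet_Ico, ?_⟩
    have h1 : ∫⁻ t in Ico (0:ℝ) 1, ‖(t:ℂ) ^ n * f t‖ₑ ∂μ ≤
        ∫⁻ t in Ico (0:ℝ) 1, ∑' k, ‖F k t‖ₑ ∂μ := by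
      refine setLIntegral_mono' measurableSet_Ico fun t ht => ?_
      rw [← (hsum t ht).tsum_eq]
      exact enorm_tsum_le_tsum_enorm
    refine h1.trans_lt ?_
    rw [lintegral_tsum (fun k => (hFi k).1.enorm)]
    have h2 : ∀ k, ∫⁻ t in Ico (0:ℝ) 1, ‖F k t‖ₑ ∂μ =
        ENNReal.ofReal ‖(mom μ (n + k) : ℂ) * tc f k‖ := by
      intro k
      rw [← hFn k, ofReal_integral_norm_eq_lintegral_enorm (hFi k)]
    simp_rw [h2]
    exact hs.tsum_ofReal_lt_top
  · have h := hasSum_integral_of_summable_integral_norm hFi (by simp_rw [hFn]; exact hs)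
    have e2 : ∫ t in Ico (0:ℝ) 1, ∑' k, F k t ∂μ = ∫ t in Ico (0:ℝ) 1, (t:ℂ) ^ n * f t ∂μ :=
      setIntegral_congr_fun measurableSet_Ico fun t ht => (hsum t ht).tsum_eq
    rw [← e2, ← h.tsum_eq, hmuCoeff]
    refine tsum_congr fun k => ?_
    simp only [F]
    rw [integral_mul_const, integral_complex_ofReal, mom]

lemma bloch_integrable (μ : Measure ℝ) [IsFiniteMeasure μ]
    (hw : IntegrableOn (fun t => 1 + Real.log (1 / (1 - t))) (Ico 0 1) μ)
    {f : ℂ → ℂ} (hf : MemBloch f) : IntegrableOn (fun t : ℝ => f t) (Ico 0 1) μ := by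
  refine Integrable.mono' (hw.const_mul (blochNorm f)) ?_ ?_
  · refine ContinuousOn.aestronglyMeasurable ?_ measurableSet_Ico
    exact hf.1.continuousOn.comp (by fun_prop) (fun t ht => ofReal_mem_ball ht)
  · filter_upwards [ae_restrict_mem measurableSet_Ico] with t ht
    exact bloch_growth hf ht

lemma bloch_mom_bound (μ : Measure ℝ) [IsFiniteMeasure μ]
    (hw : IntegrableOn (fun t => 1 + Real.log (1 / (1 - t))) (Ico 0 1) μ) {K : ℝ}
    (hK : ∀ n : ℕ, ∫ t in Ico (0:ℝ) 1, t ^ n * (1 + Real.log (1 / (1 - t))) ∂μ ≤ K / (n + 1))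
    {f : ℂ → ℂ} (hf : MemBloch f) (n : ℕ) :
    ‖∫ t in Ico (0:ℝ) 1, (t:ℂ) ^ n * f t ∂μ‖ ≤ blochNorm f * (K / (n + 1)) := by
  have hwn : IntegrableOn (fun t => t ^ n * (1 + Real.log (1 / (1 - t)))) (Ico 0 1) μ := by
    refine Integrable.mono' hw ?_ ?_
    · apply Measurable.aestronglyMeasurable; fun_prop
    · filter_upwards [ae_restrict_mem measurableSet_Ico] with t ht
      have h0 := log_nonneg' ht
      have htn : 0 ≤ t ^ n := pow_nonneg ht.1 n
      rw [Real.norm_of_nonneg (by positivity)]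
      have : t ^ n ≤ 1 := pow_le_one₀ ht.1 ht.2.le
      nlinarith
  calc ‖∫ t in Ico (0:ℝ) 1, (t:ℂ) ^ n * f t ∂μ‖
      ≤ ∫ t in Ico (0:ℝ) 1, blochNorm f * (t ^ n * (1 + Real.log (1 / (1 - t)))) ∂μ := by
        refine norm_integral_le_of_norm_le (hwn.const_mul _) ?_
        filter_upwards [ae_restrict_mem measurableSet_Ico] with t ht
        rw [norm_mul, norm_pow, Complex.norm_real, Real.norm_of_nonneg ht.1]
        have h1 := mul_le_mul_of_nonneg_left (bloch_growth hf ht) (pow_nonneg ht.1 n)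
        linarith
    _ = blochNorm f * ∫ t in Ico (0:ℝ) 1, t ^ n * (1 + Real.log (1 / (1 - t))) ∂μ := by
        rw [integral_const_mul]
    _ ≤ _ := mul_le_mul_of_nonneg_left (hK n) (blochNorm_nonneg f)

lemma core {F : ℂ → ℂ} {c : ℕ → ℂ} {K B : ℝ} (hK : 0 ≤ K) (hB : 0 ≤ B)
    (hF : ∀ z ∈ ball (0:ℂ) 1, HasSum (fun n => c n * z ^ n) (F z))
    (hc : ∀ n : ℕ, ‖c n‖ ≤ B * (K / (n + 1))) :
    MemLambda F ∧ lambdaNorm F ≤ 2 * K * B := by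
  obtain ⟨hd, htc⟩ := of_hasSum hF
  have h1 := lambda_upper hd (K := B * K) (by positivity) (by
    intro n
    rw [htc]
    have h := hc (n + 1)
    push_cast at h
    calc ((n:ℝ) + 1) * ‖c (n + 1)‖ ≤ ((n:ℝ) + 1 + 1) * (B * (K / (n + 1 + 1))) := by
          gcongr; linarith
      _ = B * K := by field_simp)
  refine ⟨h1.1, h1.2.trans ?_⟩
  have h0 : F 0 = c 0 := by rw [← htc 0]; simp [tc]
  have h2 := hc 0
  simp only [Nat.cast_zero, zero_add, div_one] at h2
  rw [h0]; linarith

lemma i_of_iv (μ : Measure ℝ) [IsFiniteMeasure μ] (h : LogMomentBigO μ) :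
    (∀ f : ℂ → ℂ, MemBloch f → ImuWD μ f ∧ MemLambda (Imu μ f)) ∧
        ∃ C > 0, ∀ f : ℂ → ℂ, MemBloch f → lambdaNorm (Imu μ f) ≤ C * blochNorm f := by
  obtain ⟨hw, K, hK0, hK⟩ := weight_of_logmoment μ h
  have key : ∀ f : ℂ → ℂ, MemBloch f → MemLambda (Imu μ f) ∧
      lambdaNorm (Imu μ f) ≤ 2 * K * blochNorm f := fun f hf =>
    core hK0.le (blochNorm_nonneg f)
      (fun z hz => (imu_hasSum μ (bloch_integrable μ hw hf) hz).2) (bloch_mom_bound μ hw hK hf)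
  exact ⟨fun f hf => ⟨fun z hz => (imu_hasSum μ (bloch_integrable μ hw hf) hz).1, (key f hf).1⟩,
    2 * K, by positivity, fun f hf => (key f hf).2⟩

lemma mom_le (μ : Measure ℝ) [IsFiniteMeasure μ]
    (hw : IntegrableOn (fun t => 1 + Real.log (1 / (1 - t))) (Ico 0 1) μ) {K : ℝ}
    (hK : ∀ n : ℕ, ∫ t in Ico (0:ℝ) 1, t ^ n * (1 + Real.log (1 / (1 - t))) ∂μ ≤ K / (n + 1))
    (n : ℕ) : mom μ n ≤ K / (n + 1) := by
  refine le_trans ?_ (hK n)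
  refine setIntegral_mono_on (integrable_pow μ n) ?_ measurableSet_Ico ?_
  · refine Integrable.mono' hw ?_ ?_
    · apply Measurable.aestronglyMeasurable; fun_prop
    · filter_upwards [ae_restrict_mem measurableSet_Ico] with t ht
      have h0 := log_nonneg' ht
      have htn : 0 ≤ t ^ n := pow_nonneg ht.1 n
      rw [Real.norm_of_nonneg (by positivity)]
      have : t ^ n ≤ 1 := pow_le_one₀ ht.1 ht.2.le
      nlinarith
  · intro t ht
    have h0 := log_nonneg' ht
    have htn : 0 ≤ t ^ n := pow_nonneg ht.1 n
    nlinarith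

lemma ii_of_iv (μ : Measure ℝ) [IsFiniteMeasure μ] (h : LogMomentBigO μ) :
    (∀ f : ℂ → ℂ, MemBloch f → HmuWD μ f ∧ MemLambda (Hmu μ f)) ∧
        ∃ C > 0, ∀ f : ℂ → ℂ, MemBloch f → lambdaNorm (Hmu μ f) ≤ C * blochNorm f := by
  obtain ⟨hw, K, hK0, hK⟩ := weight_of_logmoment μ h
  have hsum : ∀ f : ℂ → ℂ, MemBloch f → ∀ n : ℕ,
      Summable fun k : ℕ => ‖(mom μ (n + k) : ℂ) * tc f k‖ := by
    intro f hf n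
    rw [← summable_nat_add_iff 1]
    refine Summable.of_nonneg_of_le (fun k => norm_nonneg _) (fun k => ?_)
      ((bloch_coeff hf).mul_left K)
    rw [norm_mul, Complex.norm_real, Real.norm_of_nonneg (mom_nonneg _ _)]
    have h1 : mom μ (n + (k + 1)) ≤ K / (k + 1) := by
      refine (mom_le μ hw hK _).trans ?_
      push_cast
      gcongr
      linarith [(Nat.cast_nonneg n : (0:ℝ) ≤ n)]
    calc mom μ (n + (k + 1)) * ‖tc f (k + 1)‖ ≤ K / (k + 1) * ‖tc f (k + 1)‖ := by gcongr
      _ = _ := by ring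
  have hco : ∀ f : ℂ → ℂ, MemBloch f → ∀ n : ℕ, ‖hmuCoeff μ f n‖ ≤ blochNorm f * (K / (n + 1)) := by
    intro f hf n
    rw [(hmu_coeff μ hf.1 n (hsum f hf n)).2]
    exact bloch_mom_bound μ hw hK hf n
  have hz : ∀ f : ℂ → ℂ, MemBloch f → ∀ z ∈ ball (0:ℂ) 1,
      Summable fun n : ℕ => ‖hmuCoeff μ f n * z ^ n‖ := by
    intro f hf z hz
    have hz' : ‖z‖ < 1 := by simpa using hz
    refine Summable.of_nonneg_of_le (fun n => norm_nonneg _) (fun n => ?_)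
      ((summable_geometric_of_lt_one (norm_nonneg z) hz').mul_left (blochNorm f * K))
    rw [norm_mul, norm_pow]
    gcongr
    refine (hco f hf n).trans ?_
    have := blochNorm_nonneg f
    gcongr
    apply div_le_self hK0.le
    linarith [(Nat.cast_nonneg n : (0:ℝ) ≤ n)]
  have key : ∀ f : ℂ → ℂ, MemBloch f → MemLambda (Hmu μ f) ∧
      lambdaNorm (Hmu μ f) ≤ 2 * K * blochNorm f := fun f hf =>
    core hK0.le (blochNorm_nonneg f) (fun z hzz => (hz f hf z hzz).of_norm.hasSum) (hco f hf)
  exact ⟨fun f hf => ⟨⟨hsum f hf, hz f hf⟩, (key f hf).1⟩,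
    2 * K, by positivity, fun f hf => (key f hf).2⟩

lemma iv_of_coeffs (μ : Measure ℝ) [IsFiniteMeasure μ]
    (hi : IntegrableOn (fun t : ℝ => f0 t) (Ico 0 1) μ) {F : ℂ → ℂ} (hF : MemLambda F)
    (hc : ∀ n, tc F n = ∫ t in Ico (0:ℝ) 1, (t:ℂ) ^ n * f0 t ∂μ) : LogMomentBigO μ := by
  have hL : IntegrableOn (fun t : ℝ => Real.log (1 / (1 - t))) (Ico 0 1) μ := by
    refine Integrable.mono' hi.norm ?_ ?_
    · apply Measurable.aestronglyMeasurable; fun_prop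
    · filter_upwards [ae_restrict_mem measurableSet_Ico] with t ht
      rw [f0_ofReal ht, Complex.norm_real]
  have hLn : ∀ n : ℕ, IntegrableOn (fun t : ℝ => t ^ n * Real.log (1 / (1 - t))) (Ico 0 1) μ := by
    intro n
    refine Integrable.mono' hL ?_ ?_
    · apply Measurable.aestronglyMeasurable; fun_prop
    · filter_upwards [ae_restrict_mem measurableSet_Ico] with t ht
      have h0 := log_nonneg' ht
      have htn : 0 ≤ t ^ n := pow_nonneg ht.1 n
      rw [Real.norm_of_nonneg (by positivity)]
      have : t ^ n ≤ 1 := pow_le_one₀ ht.1 ht.2.le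
      nlinarith
  let c : ℕ → ℝ := fun n => ∫ t in Ico (0:ℝ) 1, t ^ n * Real.log (1 / (1 - t)) ∂μ
  have hcc : ∀ n, tc F n = (c n : ℂ) := by
    intro n
    rw [hc n, ← integral_complex_ofReal]
    refine setIntegral_congr_fun measurableSet_Ico fun t ht => ?_
    beta_reduce
    rw [f0_ofReal ht]
    push_cast
    rfl
  have hanti : Antitone c := by
    intro a b hab
    refine setIntegral_mono_on (hLn b) (hLn a) measurableSet_Ico fun t ht => ?_
    exact mul_le_mul_of_nonneg_right (pow_le_pow_of_le_one ht.1 ht.2.le hab) (log_nonneg' ht)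
  have hnn : ∀ n, 0 ≤ c n := fun n =>
    setIntegral_nonneg measurableSet_Ico fun t ht => mul_nonneg (pow_nonneg ht.1 _) (log_nonneg' ht)
  obtain ⟨C, hC, h⟩ := lambda_lower hF hanti hnn hcc
  refine ⟨C, hC, fun n hn => ?_⟩
  rw [← ofReal_integral_eq_lintegral_ofReal (hLn n)]
  · exact ENNReal.ofReal_le_ofReal (h n hn)
  · filter_upwards [ae_restrict_mem measurableSet_Ico] with t ht
    exact mul_nonneg (pow_nonneg ht.1 _) (log_nonneg' ht)

lemma iv_of_i (μ : Measure ℝ) [IsFiniteMeasure μ]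
    (h : ∀ f : ℂ → ℂ, MemBloch f → ImuWD μ f ∧ MemLambda (Imu μ f)) : LogMomentBigO μ := by
  obtain ⟨hwd, hm⟩ := h f0 f0_bloch
  have hi : IntegrableOn (fun t : ℝ => f0 t) (Ico 0 1) μ := by
    simpa using hwd 0 (by simp)
  exact iv_of_coeffs μ hi hm (of_hasSum fun z hz => (imu_hasSum μ hi hz).2).2

lemma iv_of_ii (μ : Measure ℝ) [IsFiniteMeasure μ]
    (h : ∀ f : ℂ → ℂ, MemBloch f → HmuWD μ f ∧ MemLambda (Hmu μ f)) : LogMomentBigO μ := by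
  obtain ⟨hwd, hm⟩ := h f0 f0_bloch
  have hi : IntegrableOn (fun t : ℝ => f0 t) (Ico 0 1) μ := by
    simpa using (hmu_coeff μ f0_bloch.1 0 (hwd.1 0)).1
  refine iv_of_coeffs μ hi hm fun n => ?_
  rw [← (hmu_coeff μ f0_bloch.1 n (hwd.1 n)).2]
  exact (of_hasSum (b := hmuCoeff μ f0) fun z hz => (hwd.2 z hz).of_norm.hasSum).2 n

/-- Theorem 3.4 for `X = B` (the Bloch space): equivalent conditions for boundedness of
`I_μ` and `H_μ` from the Bloch space into `Λ²_{1/2}`. -/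
theorem imu_hmu_bloch_lambda_tfae (μ : Measure ℝ) [IsFiniteMeasure μ]
    (hsupp : μ (Ico (0:ℝ) 1)ᶜ = 0) :
    [ (∀ f : ℂ → ℂ, MemBloch f → ImuWD μ f ∧ MemLambda (Imu μ f)) ∧
        ∃ C > 0, ∀ f : ℂ → ℂ, MemBloch f → lambdaNorm (Imu μ f) ≤ C * blochNorm f,
      (∀ f : ℂ → ℂ, MemBloch f → HmuWD μ f ∧ MemLambda (Hmu μ f)) ∧
        ∃ C > 0, ∀ f : ℂ → ℂ, MemBloch f → lambdaNorm (Hmu μ f) ≤ C * blochNorm f,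
      IsLogCarleson μ 1 1,
      LogMomentBigO μ ].TFAE := by
  tfae_have 1 → 4 := fun h => iv_of_i μ h.1
  tfae_have 4 → 1 := i_of_iv μ
  tfae_have 2 → 4 := fun h => iv_of_ii μ h.1
  tfae_have 4 → 2 := ii_of_iv μ
  tfae_have 3 → 4 := logmoment_of_carleson μ
  tfae_have 4 → 3 := carleson_of_logmoment μ
  tfae_finish

end PaperHankel
end
end
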